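/- arXiv:1702.00385 — 3 statements merged into one kernel-verified Lean document; each statement's English description precedes it below -/
import Mathlib

section
/- Braiding of adjacent Artin generators (part of Theorem 6.1): Let k ≥ 3, r ≥ 2, n = rk. For every index j ∈ ZMod n there exist a sign ε_j ∈ {+1, −1} and a Laurent monomial M_j in the frozen minors (both independent of v) such that for every generic configuration v : ZMod n → (Fin k → ℂ), the j-th vector of σ_1(σ_2(σ_1(v))) equals ε_j · M_j(v) · (the j-th vector of σ_2(σ_1(σ_2(v)))). In other words, σ_1 ∘ σ_2 ∘ σ_1 and σ_2 ∘ σ_1 ∘ σ_2 agree componentwise up to signs and Laurent monomials in the frozen minors. -/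
open scoped BigOperators

noncomputable section

/-- Determinant of the `k × k` matrix whose `b`-th column is `c b`. -/
def colDet {k : ℕ} (c : Fin k → Fin k → ℂ) : ℂ :=
  Matrix.det (Matrix.of fun a b => c b a)

/-- The frozen Plücker minor `Δ_m(v)`, on the `k` cyclically consecutive
columns starting at `m`. -/
def frozen (k n : ℕ) (v : ZMod n → Fin k → ℂ) (m : ZMod n) : ℂ :=
  colDet (fun b : Fin k => v (m + ((b : ℕ) : ZMod n)))

/-- A configuration is generic if all frozen minors are nonzero. -/
def Generic (k n : ℕ) (v : ZMod n → Fin k → ℂ) : Prop :=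
  ∀ m : ZMod n, frozen k n v m ≠ 0

/-- The Laurent monomial `∏_m Δ_m(v)^(e m)` in the frozen minors. -/
def laurent (k n : ℕ) (e : Fin n → ℤ) (v : ZMod n → Fin k → ℂ) : ℂ :=
  ∏ m : Fin n, frozen k n v ((m : ℕ) : ZMod n) ^ e m

/-- The Artin generator `σ_i` acting on configurations. -/
def artin (k n i : ℕ) (v : ZMod n → Fin k → ℂ) : ZMod n → Fin k → ℂ :=
  fun j =>
    if (ZMod.val j) % k = i % k then v (j + 1)
    else if (ZMod.val j) % k = (i + 1) % k then
      (colDet (fun b : Fin k =>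
          if (b : ℕ) = 0 then v (j - 1) else v (j + ((b : ℕ) : ZMod n)))) • v j
        - (frozen k n v j) • v (j - 1)
    else v j

/-- `artinComp k n i v = σ_i (σ_{i-1} (⋯ (σ_1 v)))`. -/
def artinComp (k n : ℕ) : ℕ → (ZMod n → Fin k → ℂ) → ZMod n → Fin k → ℂ
  | 0, v => v
  | m + 1, v => artin k n (m + 1) (artinComp k n m v)

/-- `artinCompRev k n i v = σ_1 (σ_2 (⋯ (σ_i v)))`. -/
def artinCompRev (k n : ℕ) : ℕ → (ZMod n → Fin k → ℂ) → ZMod n → Fin k → ℂ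
  | 0, v => v
  | m + 1, v => artinCompRev k n m (artin k n (m + 1) v)

/-- The degree-one Grassmann–Cayley meet
`(a_1 ⋯ a_p) ∩ (b_1 ⋯ b_q)` (intended for `p + q = k + 1`):
`Σ_{i=1}^{p} (−1)^{p−i} · det(a_1 | ⋯ | â_i | ⋯ | a_p | b_1 | ⋯ | b_q) · a_i`. -/
def gcMeet {k p q : ℕ} (a : Fin p → Fin k → ℂ) (b : Fin q → Fin k → ℂ) : Fin k → ℂ :=
  ∑ i : Fin p, ((-1 : ℂ) ^ (p - 1 - (i : ℕ)) *
    colDet (fun c : Fin k =>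
      if hc : (c : ℕ) < p - 1 then
        (if hci : (c : ℕ) < (i : ℕ) then a ⟨(c : ℕ), Nat.lt_trans hci i.isLt⟩
         else a ⟨(c : ℕ) + 1, by have := i.isLt; omega⟩)
      else if hq : (c : ℕ) - (p - 1) < q then b ⟨(c : ℕ) - (p - 1), hq⟩ else 0)) • a i



/-- Determinant of columns `x, y, z, D 0, …, D (m-1)`. -/
def tri (m : ℕ) (D : ℕ → Fin (m+3) → ℂ) (x y z : Fin (m+3) → ℂ) : ℂ :=
  colDet (fun b : Fin (m+3) => if (b : ℕ) = 0 then x else if (b : ℕ) = 1 then y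
    else if (b : ℕ) = 2 then z else D ((b : ℕ) - 3))

theorem colDet_rot (n : ℕ) (g : Fin (n+1) → Fin (n+1) → ℂ) :
    colDet g = (-1)^n * colDet (Fin.cons (g (Fin.last n)) (fun i : Fin n => g i.castSucc)) := by
  have h : g = fun i => (Fin.cons (g (Fin.last n)) (fun i : Fin n => g i.castSucc) :
      Fin (n+1) → Fin (n+1) → ℂ) (finRotate _ i) := by
    rw [← Fin.snoc_eq_cons_rotate]
    exact (Fin.snoc_init_self g).symm
  conv_lhs => rw [h]
  unfold colDet
  have := Matrix.det_permute' (finRotate (n+1)) (Matrix.of fun a b =>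
    (Fin.cons (g (Fin.last n)) (fun i : Fin n => g i.castSucc) : Fin (n+1) → Fin (n+1) → ℂ) b a)
  rw [sign_finRotate] at this
  push_cast at this
  rw [← this]
  rfl

theorem cons_val (n : ℕ) {V : Type} (x : V) (f : Fin n → V) (b : Fin (n+1)) :
    (Fin.cons x f : Fin (n+1) → V) b =
      if h : (b : ℕ) = 0 then x else f ⟨(b : ℕ) - 1, by omega⟩ := by
  refine Fin.cases ?_ (fun i => ?_) b
  · simp
  · simp

theorem sgn_sq (m : ℕ) : ((-1 : ℂ)^(m+2)) * (-1)^(m+2) = 1 := by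
  rw [← mul_pow]; simp

/-- columns x y D z -/
theorem shape1 (m : ℕ) (D : ℕ → Fin (m+3) → ℂ) (x y z : Fin (m+3) → ℂ)
    (g : Fin (m+3) → Fin (m+3) → ℂ)
    (h : ∀ b : Fin (m+3), g b = if (b : ℕ) = 0 then x else if (b : ℕ) = 1 then y
      else if (b : ℕ) = m + 2 then z else D ((b : ℕ) - 2)) :
    colDet g = (-1)^(m+2) * tri m D z x y := by
  rw [colDet_rot (m+2) g]
  congr 1
  unfold tri
  congr 1
  funext b
  rw [cons_val]
  have hb := b.2
  simp only [h, Fin.val_last, Fin.val_castSucc]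
  split_ifs <;> first | rfl | (exfalso; omega) | (congr 1; omega)

theorem shape2 (m : ℕ) (D : ℕ → Fin (m+3) → ℂ) (x y z : Fin (m+3) → ℂ)
    (g : Fin (m+3) → Fin (m+3) → ℂ)
    (h : ∀ b : Fin (m+3), g b = if (b : ℕ) = 0 then x else if (b : ℕ) = m + 1 then y
      else if (b : ℕ) = m + 2 then z else D ((b : ℕ) - 1)) :
    colDet g = tri m D y z x := by
  rw [colDet_rot (m+2) g, colDet_rot (m+2), ← mul_assoc, sgn_sq, one_mul]
  unfold tri
  congr 1
  funext b
  have hb := b.2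
  simp only [cons_val, h, Fin.val_last, Fin.val_castSucc]
  split_ifs <;> first | rfl | (exfalso; omega) | (congr 1; omega)

theorem shape3 (m : ℕ) (D : ℕ → Fin (m+3) → ℂ) (x y z : Fin (m+3) → ℂ)
    (g : Fin (m+3) → Fin (m+3) → ℂ)
    (h : ∀ b : Fin (m+3), g b = if (b : ℕ) = m then x else if (b : ℕ) = m + 1 then y
      else if (b : ℕ) = m + 2 then z else D (b : ℕ)) :
    colDet g = (-1)^(m+2) * tri m D x y z := by
  rw [colDet_rot (m+2) g, colDet_rot (m+2), colDet_rot (m+2), ← mul_assoc, ← mul_assoc,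
    sgn_sq, one_mul]
  congr 1
  unfold tri
  congr 1
  funext b
  have hb := b.2
  simp only [cons_val, h, Fin.val_last, Fin.val_castSucc]
  split_ifs <;> first | rfl | (exfalso; omega) | (congr 1; omega)

theorem colDet_eq {k : ℕ} (c : Fin k → Fin k → ℂ) :
    colDet c = Matrix.detRowAlternating c := by
  unfold colDet
  rw [← Matrix.det_transpose]
  rfl

theorem tri_zero_of_eq (m : ℕ) (D : ℕ → Fin (m+3) → ℂ) (x y z : Fin (m+3) → ℂ)
    (h : x = y ∨ y = z ∨ x = z ∨ ∃ i < m, x = D i) : tri m D x y z = 0 := by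
  unfold tri
  rw [colDet_eq]
  rcases h with h | h | h | ⟨i, hi, h⟩
  · refine AlternatingMap.map_eq_zero_of_eq _ _ (i := ⟨0, by omega⟩) (j := ⟨1, by omega⟩) ?_ ?_
    · simp [h]
    · simp
  · refine AlternatingMap.map_eq_zero_of_eq _ _ (i := ⟨1, by omega⟩) (j := ⟨2, by omega⟩) ?_ ?_
    · simp [h]
    · simp
  · refine AlternatingMap.map_eq_zero_of_eq _ _ (i := ⟨0, by omega⟩) (j := ⟨2, by omega⟩) ?_ ?_
    · simp [h]
    · simp
  · refine AlternatingMap.map_eq_zero_of_eq _ _ (i := ⟨0, by omega⟩) (j := ⟨3+i, by omega⟩) ?_ ?_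
    · have h1 : 3 + i ≠ 0 := by omega
      have h2 : 3 + i ≠ 1 := by omega
      have h3 : 3 + i ≠ 2 := by omega
      simp [h, h1, h2, h3]
    · simp

theorem tri_eq_update (m : ℕ) (D : ℕ → Fin (m+3) → ℂ) (x y z : Fin (m+3) → ℂ) :
    tri m D x y z = Matrix.detRowAlternating (Function.update (fun b : Fin (m+3) =>
      if (b : ℕ) = 0 then (0 : Fin (m+3) → ℂ) else if (b : ℕ) = 1 then y
      else if (b : ℕ) = 2 then z else D ((b : ℕ) - 3)) ⟨0, by omega⟩ x) := by
  unfold tri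
  rw [colDet_eq]
  congr 1
  funext b
  by_cases hb : (b : ℕ) = 0
  · have : b = ⟨0, by omega⟩ := Fin.ext hb
    rw [this]
    simp
  · rw [Function.update_of_ne]
    · simp [hb]
    · intro h; exact hb (by simp [h])

theorem tri_lin (m : ℕ) (D : ℕ → Fin (m+3) → ℂ) (α β : ℂ) (x x' y z : Fin (m+3) → ℂ) :
    tri m D (α • x - β • x') y z = α * tri m D x y z - β * tri m D x' y z := by
  simp only [tri_eq_update]
  rw [AlternatingMap.map_update_sub, AlternatingMap.map_update_smul,
    AlternatingMap.map_update_smul]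
  simp

/-- `tri` as a linear functional of the first slot. -/
def triLin (m : ℕ) (D : ℕ → Fin (m+3) → ℂ) (y z : Fin (m+3) → ℂ) : (Fin (m+3) → ℂ) →ₗ[ℂ] ℂ where
  toFun x := tri m D x y z
  map_add' x x' := by simp only [tri_eq_update, AlternatingMap.map_update_add]
  map_smul' c x := by simp only [tri_eq_update, AlternatingMap.map_update_smul]; rfl

theorem tri_sub (m : ℕ) (D : ℕ → Fin (m+3) → ℂ) (x x' y z : Fin (m+3) → ℂ) :
    tri m D (x - x') y z = tri m D x y z - tri m D x' y z := (triLin m D y z).map_sub x x'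

theorem tri_cyc (m : ℕ) (D : ℕ → Fin (m+3) → ℂ) (x y z : Fin (m+3) → ℂ) :
    tri m D x y z = tri m D y z x := by
  unfold tri
  rw [colDet_eq, colDet_eq]
  have h01 : (⟨0, by omega⟩ : Fin (m+3)) ≠ ⟨1, by omega⟩ := by simp
  have h12 : (⟨1, by omega⟩ : Fin (m+3)) ≠ ⟨2, by omega⟩ := by simp
  rw [← neg_neg (Matrix.detRowAlternating (R := ℂ) _), ← AlternatingMap.map_swap _ _ h01,
    ← AlternatingMap.map_swap _ _ h12]
  congr 1
  funext b
  simp only [Function.comp, Equiv.swap_apply_def, Fin.ext_iff, apply_ite Fin.val]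
  split_ifs <;> first | rfl | (exfalso; omega)

theorem tri_swap (m : ℕ) (D : ℕ → Fin (m+3) → ℂ) (x y z : Fin (m+3) → ℂ) :
    tri m D x y z = - tri m D y x z := by
  unfold tri
  rw [colDet_eq, colDet_eq]
  have h01 : (⟨0, by omega⟩ : Fin (m+3)) ≠ ⟨1, by omega⟩ := by simp
  rw [← AlternatingMap.map_swap _ _ h01]
  congr 1
  funext b
  simp only [Function.comp, Equiv.swap_apply_def, Fin.ext_iff, apply_ite Fin.val]
  split_ifs <;> first | rfl | (exfalso; omega)

theorem cramer_rel (k : ℕ) (w : Fin (k+1) → Fin k → ℂ) :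
    ∑ i : Fin (k+1), ((-1 : ℂ)^(i : ℕ) * colDet (fun b => w (i.succAbove b))) • w i = 0 := by
  funext r
  have h0 : Matrix.det (Matrix.of (Fin.cons (fun i => w i r) (fun a i => w i a)) :
      Matrix (Fin (k+1)) (Fin (k+1)) ℂ) = 0 := by
    apply Matrix.det_zero_of_row_eq (i := 0) (j := r.succ) (Fin.succ_ne_zero r).symm
    simp [Matrix.of]
    rfl
  rw [Matrix.det_succ_row_zero] at h0
  simp only [Finset.sum_apply, Pi.smul_apply, smul_eq_mul, Pi.zero_apply]
  rw [← h0]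
  refine Finset.sum_congr rfl fun i _ => ?_
  simp only [Matrix.of_apply, Fin.cons_zero]
  rw [mul_assoc, mul_comm (colDet _), ← mul_assoc]
  rfl

theorem val_succAbove (n : ℕ) (i : Fin (n+1)) (b : Fin n) :
    ((b : ℕ) < (i : ℕ) ∧ (i.succAbove b : ℕ) = (b : ℕ)) ∨
      (¬ (b : ℕ) < (i : ℕ) ∧ (i.succAbove b : ℕ) = (b : ℕ) + 1) := by
  by_cases h : (b : ℕ) < (i : ℕ)
  · left; refine ⟨h, ?_⟩
    rw [Fin.succAbove, if_pos (by simpa [Fin.lt_def] using h)]; rfl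
  · right; refine ⟨h, ?_⟩
    rw [Fin.succAbove, if_neg (by simpa [Fin.lt_def] using h)]; rfl

theorem plucker (m : ℕ) (D : ℕ → Fin (m+3) → ℂ) (x y z w s t : Fin (m+3) → ℂ) :
    tri m D y z w * tri m D x s t - tri m D x z w * tri m D y s t
      + tri m D x y w * tri m D z s t - tri m D x y z * tri m D w s t = 0 := by
  have h := cramer_rel (m+3) (fun b => if (b : ℕ) = 0 then x else if (b : ℕ) = 1 then y
    else if (b : ℕ) = 2 then z else if (b : ℕ) = 3 then w else D ((b : ℕ) - 4))
  have h2 := congrArg (triLin m D s t) h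
  rw [map_sum, map_zero] at h2
  rw [Fin.sum_univ_succ, Fin.sum_univ_succ, Fin.sum_univ_succ, Fin.sum_univ_succ] at h2
  rw [Finset.sum_eq_zero (s := (Finset.univ : Finset (Fin m)))] at h2
  · simp only [map_smul, triLin, LinearMap.coe_mk, AddHom.coe_mk] at h2
    have e0 : colDet (fun b : Fin (m+3) => (fun b : Fin (m+3+1) => if (b : ℕ) = 0 then x else if (b : ℕ) = 1 then y
      else if (b : ℕ) = 2 then z else if (b : ℕ) = 3 then w else D ((b : ℕ) - 4)) ((0 : Fin (m+3+1)).succAbove b))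
        = tri m D y z w := by
      unfold tri
      congr 1; funext b
      have hN := val_succAbove (m+3) (0 : Fin (m+3+1)) b
      dsimp only
      generalize (((0 : Fin (m+3+1)).succAbove b : Fin (m+3+1)) : ℕ) = N at hN ⊢
      simp only [Fin.val_zero, Fin.val_succ] at hN
      split_ifs <;> first | rfl | (exfalso; omega) | (congr 1; omega)
    have e1 : colDet (fun b : Fin (m+3) => (fun b : Fin (m+3+1) => if (b : ℕ) = 0 then x else if (b : ℕ) = 1 then y
      else if (b : ℕ) = 2 then z else if (b : ℕ) = 3 then w else D ((b : ℕ) - 4)) ((Fin.succ 0 : Fin (m+3+1)).succAbove b))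
        = tri m D x z w := by
      unfold tri
      congr 1; funext b
      have hN := val_succAbove (m+3) (Fin.succ 0 : Fin (m+3+1)) b
      dsimp only
      generalize (((Fin.succ 0 : Fin (m+3+1)).succAbove b : Fin (m+3+1)) : ℕ) = N at hN ⊢
      simp only [Fin.val_zero, Fin.val_succ] at hN
      split_ifs <;> first | rfl | (exfalso; omega) | (congr 1; omega)
    have e2 : colDet (fun b : Fin (m+3) => (fun b : Fin (m+3+1) => if (b : ℕ) = 0 then x else if (b : ℕ) = 1 then y
      else if (b : ℕ) = 2 then z else if (b : ℕ) = 3 then w else D ((b : ℕ) - 4)) ((Fin.succ (Fin.succ 0) : Fin (m+3+1)).succAbove b))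
        = tri m D x y w := by
      unfold tri
      congr 1; funext b
      have hN := val_succAbove (m+3) (Fin.succ (Fin.succ 0) : Fin (m+3+1)) b
      dsimp only
      generalize (((Fin.succ (Fin.succ 0) : Fin (m+3+1)).succAbove b : Fin (m+3+1)) : ℕ) = N at hN ⊢
      simp only [Fin.val_zero, Fin.val_succ] at hN
      split_ifs <;> first | rfl | (exfalso; omega) | (congr 1; omega)
    have e3 : colDet (fun b : Fin (m+3) => (fun b : Fin (m+3+1) => if (b : ℕ) = 0 then x else if (b : ℕ) = 1 then y
      else if (b : ℕ) = 2 then z else if (b : ℕ) = 3 then w else D ((b : ℕ) - 4)) ((Fin.succ (Fin.succ (Fin.succ 0)) : Fin (m+3+1)).succAbove b))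
        = tri m D x y z := by
      unfold tri
      congr 1; funext b
      have hN := val_succAbove (m+3) (Fin.succ (Fin.succ (Fin.succ 0)) : Fin (m+3+1)) b
      dsimp only
      generalize (((Fin.succ (Fin.succ (Fin.succ 0)) : Fin (m+3+1)).succAbove b : Fin (m+3+1)) : ℕ) = N at hN ⊢
      simp only [Fin.val_zero, Fin.val_succ] at hN
      split_ifs <;> first | rfl | (exfalso; omega) | (congr 1; omega)
    rw [e0, e1, e2, e3] at h2
    simp only [Fin.val_zero, Fin.val_succ] at h2
    simp at h2
    linear_combination h2
  · intro i _
    rw [map_smul]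
    have : tri m D (D i) s t = 0 := tri_zero_of_eq _ _ _ _ _ (Or.inr (Or.inr (Or.inr ⟨i, i.2, rfl⟩)))
    simp [triLin, this]

/-- residue predicate -/
theorem res_iff {k n : ℕ} [NeZero n] (h : k ∣ n) (j : ZMod n) (c : ℕ) :
    (ZMod.val j) % k = c % k ↔ ZMod.castHom h (ZMod k) j = (c : ZMod k) := by
  conv_rhs => rw [← ZMod.natCast_zmod_val j, map_natCast]
  rw [ZMod.natCast_eq_natCast_iff']

theorem res_add {k n : ℕ} [NeZero n] (h : k ∣ n) (j : ZMod n) (hj : (ZMod.val j) % k = 1 % k)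
    (t : ℕ) : (ZMod.val (j + (t : ZMod n))) % k = (1 + t) % k := by
  rw [res_iff h] at hj ⊢
  rw [map_add, hj, map_natCast]
  push_cast; rfl

/-- The block of `w` at `q`. -/
def Blk (m n : ℕ) (w : ZMod n → Fin (m+3) → ℂ) (q : ZMod n) (D : ℕ → Fin (m+3) → ℂ)
    (a b c : Fin (m+3) → ℂ) : Prop :=
  (ZMod.val q) % (m+3) = 1 % (m+3) ∧ w q = a ∧ w (q + 1) = b ∧ w (q + 2) = c ∧
    ∀ i < m, w (q + ((3 + i : ℕ) : ZMod n)) = D i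

theorem mod_ne (m t u : ℕ) (ht : t < m + 3) (hu : u < m + 3) (h : t ≠ u) :
    (1 + t) % (m+3) ≠ (1 + u) % (m+3) := by
  intro h'
  exact h (Nat.ModEq.eq_of_lt_of_lt (Nat.ModEq.add_left_cancel' 1 h') ht hu)

theorem frozenF (m n : ℕ) (w : ZMod n → Fin (m+3) → ℂ) (q : ZMod n)
    (D : ℕ → Fin (m+3) → ℂ) (a b c a' : Fin (m+3) → ℂ) (h : Blk m n w q D a b c)
    (h' : w (q + ((m+3 : ℕ) : ZMod n)) = a') :
    frozen (m+3) n w (q + 1) = (-1)^(m+2) * tri m D a' b c := by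
  obtain ⟨hr, ha, hb, hc, hD⟩ := h
  refine shape1 _ _ _ _ _ _ fun x => ?_
  have hx := x.2
  split_ifs with h0 h1 h2
  · rw [h0, ← hb]; simp
  · rw [h1, ← hc]; congr 1; push_cast; ring
  · rw [h2, ← h']; congr 1; push_cast; ring
  · rw [← hD _ (by omega)]; congr 1
    obtain ⟨i, hi⟩ : ∃ i, (x : ℕ) = i + 2 := ⟨x - 2, by omega⟩
    rw [hi]; simp; ring

theorem frozenE (m n : ℕ) (w : ZMod n → Fin (m+3) → ℂ) (q : ZMod n)
    (D : ℕ → Fin (m+3) → ℂ) (a b c : Fin (m+3) → ℂ) (h : Blk m n w q D a b c) :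
    frozen (m+3) n w q = tri m D a b c := by
  obtain ⟨hr, ha, hb, hc, hD⟩ := h
  unfold frozen tri
  congr 1
  funext x
  have hx := x.2
  split_ifs with h0 h1 h2
  · rw [h0, ← ha]; simp
  · rw [h1, ← hb]; simp
  · rw [h2, ← hc]; simp
  · rw [← hD _ (by omega)]; congr 1
    obtain ⟨i, hi⟩ : ∃ i, (x : ℕ) = i + 3 := ⟨x - 3, by omega⟩
    rw [hi]; simp; ring

theorem frozenG (m n : ℕ) (w : ZMod n → Fin (m+3) → ℂ) (q : ZMod n)
    (D D' : ℕ → Fin (m+3) → ℂ) (a b c a' b' c' : Fin (m+3) → ℂ) (h : Blk m n w q D a b c)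
    (h' : Blk m n w (q + ((m+3 : ℕ) : ZMod n)) D' a' b' c') :
    frozen (m+3) n w (q + 2) = tri m D a' b' c := by
  obtain ⟨hr, ha, hb, hc, hD⟩ := h
  obtain ⟨hr', ha', hb', hc', hD'⟩ := h'
  refine shape2 _ _ _ _ _ _ fun x => ?_
  have hx := x.2
  split_ifs with h0 h1 h2
  · rw [h0, ← hc]; simp
  · rw [h1, ← ha']; congr 1; push_cast; ring
  · rw [h2, ← hb']; congr 1; push_cast; ring
  · rw [← hD _ (by omega)]; congr 1
    obtain ⟨i, hi⟩ : ∃ i, (x : ℕ) = i + 1 := ⟨x - 1, by omega⟩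
    rw [hi]; simp; ring

theorem frozenH (m n : ℕ) (w : ZMod n → Fin (m+3) → ℂ) (q : ZMod n)
    (D D' : ℕ → Fin (m+3) → ℂ) (a b c a' b' c' : Fin (m+3) → ℂ) (h : Blk m n w q D a b c)
    (h' : Blk m n w (q + ((m+3 : ℕ) : ZMod n)) D' a' b' c') :
    frozen (m+3) n w (q + 3) = (-1)^(m+2) * tri m D a' b' c' := by
  obtain ⟨hr, ha, hb, hc, hD⟩ := h
  obtain ⟨hr', ha', hb', hc', hD'⟩ := h'
  refine shape3 _ _ _ _ _ _ fun x => ?_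
  have hx := x.2
  split_ifs with h0 h1 h2
  · rw [h0, ← ha']; congr 1; push_cast; ring
  · rw [h1, ← hb']; congr 1; push_cast; ring
  · rw [h2, ← hc']; congr 1; push_cast; ring
  · rw [← hD _ (by omega)]; congr 1
    push_cast; ring

theorem blk_one (m n : ℕ) [NeZero n] (hkn : (m+3) ∣ n) (w : ZMod n → Fin (m+3) → ℂ) (q : ZMod n)
    (D : ℕ → Fin (m+3) → ℂ) (a b c a' : Fin (m+3) → ℂ) (h : Blk m n w q D a b c)
    (h' : w (q + ((m+3 : ℕ) : ZMod n)) = a') :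
    Blk m n (artin (m+3) n 1 w) q D b
      (((-1)^(m+2) * tri m D a' a c) • b - ((-1)^(m+2) * tri m D a' b c) • a) c := by
  have hF := frozenF m n w q D a b c a' h h'
  obtain ⟨hr, ha, hb, hc, hD⟩ := h
  have hres := res_add hkn q hr
  refine ⟨hr, ?_, ?_, ?_, ?_⟩
  · unfold artin
    rw [if_pos hr, hb]
  · have h1 : (ZMod.val (q+1)) % (m+3) = (1+1) % (m+3) := by simpa using hres 1
    unfold artin
    rw [if_neg (by rw [h1]; exact mod_ne m 1 0 (by omega) (by omega) (by omega)), if_pos h1, hF,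
      hb, add_sub_cancel_right, ha]
    congr 2
    refine shape1 _ _ _ _ _ _ fun x => ?_
    have hx := x.2
    split_ifs with h0 h1 h2
    · rfl
    · rw [h1, ← hc]; congr 1; push_cast; ring
    · rw [h2, ← h']; congr 1; push_cast; ring
    · rw [← hD _ (by omega)]; congr 1
      obtain ⟨i, hi⟩ : ∃ i, (x : ℕ) = i + 2 := ⟨x - 2, by omega⟩
      rw [hi]; simp; ring
  · have h1 : (ZMod.val (q+2)) % (m+3) = (1+2) % (m+3) := by simpa using hres 2
    unfold artin
    rw [if_neg (by rw [h1]; exact mod_ne m 2 0 (by omega) (by omega) (by omega)),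
      if_neg (by rw [h1]; exact mod_ne m 2 1 (by omega) (by omega) (by omega)), hc]
  · intro i hi
    have h1 := hres (3+i)
    unfold artin
    rw [if_neg (by rw [h1]; exact mod_ne m (3+i) 0 (by omega) (by omega) (by omega)),
      if_neg (by rw [h1]; exact mod_ne m (3+i) 1 (by omega) (by omega) (by omega)), hD i hi]

theorem blk_two (m n : ℕ) [NeZero n] (hkn : (m+3) ∣ n) (w : ZMod n → Fin (m+3) → ℂ) (q : ZMod n)
    (D D' : ℕ → Fin (m+3) → ℂ) (a b c a' b' c' : Fin (m+3) → ℂ) (h : Blk m n w q D a b c)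
    (h' : Blk m n w (q + ((m+3 : ℕ) : ZMod n)) D' a' b' c') :
    Blk m n (artin (m+3) n 2 w) q D a c
      ((tri m D a' b' b) • c - (tri m D a' b' c) • b) := by
  have hG := frozenG m n w q D D' a b c a' b' c' h h'
  obtain ⟨hr, ha, hb, hc, hD⟩ := h
  obtain ⟨hr', ha', hb', hc', hD'⟩ := h'
  have hres := res_add hkn q hr
  refine ⟨hr, ?_, ?_, ?_, ?_⟩
  · have h1 : (ZMod.val q) % (m+3) = (1+0) % (m+3) := hr
    unfold artin
    rw [if_neg (by rw [h1]; exact mod_ne m 0 1 (by omega) (by omega) (by omega)),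
      if_neg (by rw [h1]; exact mod_ne m 0 2 (by omega) (by omega) (by omega)), ha]
  · have h1 : (ZMod.val (q+1)) % (m+3) = (1+1) % (m+3) := by simpa using hres 1
    unfold artin
    rw [if_pos h1, ← hc]
    congr 1; ring
  · have h1 : (ZMod.val (q+2)) % (m+3) = (1+2) % (m+3) := by simpa using hres 2
    have h3 : q + 2 - 1 = q + 1 := by ring
    unfold artin
    rw [if_neg (by rw [h1]; exact mod_ne m 2 1 (by omega) (by omega) (by omega)), if_pos h1, hG,
      hc, h3, hb]
    congr 2
    refine shape2 _ _ _ _ _ _ fun x => ?_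
    have hx := x.2
    split_ifs with h0 h1 h2
    · rfl
    · rw [h1, ← ha']; congr 1; push_cast; ring
    · rw [h2, ← hb']; congr 1; push_cast; ring
    · rw [← hD _ (by omega)]; congr 1
      obtain ⟨i, hi⟩ : ∃ i, (x : ℕ) = i + 1 := ⟨x - 1, by omega⟩
      rw [hi]; simp; ring
  · intro i hi
    have h1 := hres (3+i)
    unfold artin
    rw [if_neg (by rw [h1]; exact mod_ne m (3+i) 1 (by omega) (by omega) (by omega)),
      if_neg (by rw [h1]; exact mod_ne m (3+i) 2 (by omega) (by omega) (by omega)), hD i hi]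

theorem laurent_zero (k n : ℕ) (v : ZMod n → Fin k → ℂ) : laurent k n 0 v = 1 := by
  simp [laurent]

theorem laurent_add (k n : ℕ) (e f : Fin n → ℤ) (v : ZMod n → Fin k → ℂ) (h : Generic k n v) :
    laurent k n (e + f) v = laurent k n e v * laurent k n f v := by
  unfold laurent
  rw [← Finset.prod_mul_distrib]
  exact Finset.prod_congr rfl fun i _ => zpow_add₀ (h _) _ _

theorem laurent_neg (k n : ℕ) (e : Fin n → ℤ) (v : ZMod n → Fin k → ℂ) :
    laurent k n (-e) v = (laurent k n e v)⁻¹ := by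
  unfold laurent
  rw [← Finset.prod_inv_distrib]
  exact Finset.prod_congr rfl fun i _ => zpow_neg _ _

theorem laurent_single (k n : ℕ) [NeZero n] (p : ZMod n) (v : ZMod n → Fin k → ℂ) :
    laurent k n (Pi.single ⟨ZMod.val p, ZMod.val_lt p⟩ 1) v = frozen k n v p := by
  unfold laurent
  rw [Finset.prod_eq_single ⟨ZMod.val p, ZMod.val_lt p⟩]
  · simp
  · intro b _ hb
    simp [Pi.single_eq_of_ne hb]
  · simp

theorem tri_lin2 (m : ℕ) (D : ℕ → Fin (m+3) → ℂ) (α β : ℂ) (x x' y z : Fin (m+3) → ℂ) :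
    tri m D y (α • x - β • x') z = α * tri m D y x z - β * tri m D y x' z := by
  rw [tri_cyc, tri_lin, tri_cyc m D y x z, tri_cyc m D y x' z]

theorem tri_lin3 (m : ℕ) (D : ℕ → Fin (m+3) → ℂ) (α β : ℂ) (x x' y z : Fin (m+3) → ℂ) :
    tri m D y z (α • x - β • x') = α * tri m D y z x - β * tri m D y z x' := by
  rw [← tri_cyc, tri_lin, tri_cyc, tri_cyc m D x']

theorem tri_z12 (m : ℕ) (D : ℕ → Fin (m+3) → ℂ) (x y : Fin (m+3) → ℂ) : tri m D x x y = 0 :=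
  tri_zero_of_eq _ _ _ _ _ (Or.inl rfl)

theorem tri_z23 (m : ℕ) (D : ℕ → Fin (m+3) → ℂ) (x y : Fin (m+3) → ℂ) : tri m D y x x = 0 :=
  tri_zero_of_eq _ _ _ _ _ (Or.inr (Or.inl rfl))

theorem tri_z13 (m : ℕ) (D : ℕ → Fin (m+3) → ℂ) (x y : Fin (m+3) → ℂ) : tri m D x y x = 0 :=
  tri_zero_of_eq _ _ _ _ _ (Or.inr (Or.inr (Or.inl rfl)))

theorem tri_swap23 (m : ℕ) (D : ℕ → Fin (m+3) → ℂ) (x y z : Fin (m+3) → ℂ) :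
    tri m D x y z = - tri m D x z y := by
  rw [tri_cyc, tri_swap, ← tri_cyc]

theorem algB (m : ℕ) (D : ℕ → Fin (m+3) → ℂ) (s α F : ℂ) (hs : s * s = 1)
    (a b c a' b' b1 b1' c1 c2 : Fin (m+3) → ℂ)
    (h1 : b1 = (s * tri m D a' a c) • b - (s * tri m D a' b c) • a)
    (h1' : b1' = α • b' - F • a')
    (h2 : c2 = tri m D b' b1' b1 • c - tri m D b' b1' c • b1)
    (h3 : c1 = tri m D a' b' b • c - tri m D a' b' c • b) :
    (s * tri m D b' b c2) • c - (s * tri m D b' c c2) • b =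
      (F * tri m D a b c * tri m D a' b' c) • c1 := by
  subst h1 h1' h2 h3
  funext i
  simp only [tri_lin, tri_lin2, tri_lin3, tri_z12, tri_z23, tri_z13, Pi.smul_apply, Pi.sub_apply,
    smul_eq_mul]
  have n1 : tri m D a' a c = tri m D a c a' := tri_cyc m D _ _ _
  have n2 : tri m D a' b c = tri m D b c a' := tri_cyc m D _ _ _
  have n3 : ∀ x, tri m D b' a' x = - tri m D x a' b' := fun x => by
    rw [tri_swap, ← tri_cyc]
  have n4 : ∀ x, tri m D a' b' x = tri m D x a' b' := fun x => by
    rw [← tri_cyc]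
  have n5 : tri m D b' b c = tri m D b c b' := tri_cyc m D _ _ _
  have n6 : tri m D b' b a = - tri m D a b b' := by rw [tri_cyc, tri_swap]
  have n7 : tri m D b' c b = - tri m D b c b' := by rw [tri_cyc, tri_swap]
  have n8 : tri m D b' c a = - tri m D a c b' := by rw [tri_cyc, tri_swap]
  have P1 := plucker m D a b c a' c b'
  have P2 := plucker m D a b c b' a' b'
  rw [tri_z12, tri_swap m D a' c b'] at P1
  rw [tri_z13] at P2
  rw [n1, n2, n3, n3, n3, n4, n4, n5, n6, n7, n8]
  linear_combination
    (F * ((tri m D a c a' * tri m D b a' b' - tri m D b c a' * tri m D a a' b') * tri m D b c b'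
        - tri m D c a' b' * tri m D b c a' * tri m D a b b') * c i
      - F * tri m D c a' b' * (tri m D a c a' * tri m D b c b'
        - tri m D b c a' * tri m D a c b') * b i) * hs
    + F * (- tri m D b c a' * P2 - tri m D b a' b' * P1) * c i
    + F * tri m D c a' b' * b i * P1

theorem algC (m : ℕ) (D : ℕ → Fin (m+3) → ℂ) (s α β F K KF : ℂ) (hKF : KF = K * F) (hs : s * s = 1)
    (a b c a' b' c' b1 b1' c1 c2 ub ub' : Fin (m+3) → ℂ)
    (h1 : b1 = (s * tri m D a' a c) • b - (s * tri m D a' b c) • a)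
    (h1' : b1' = α • b' - F • a')
    (h2 : c2 = tri m D b' b1' b1 • c - tri m D b' b1' c • b1)
    (h3 : c1 = tri m D a' b' b • c - tri m D a' b' c • b)
    (h4 : ub = (s * tri m D a' a c1) • c - (s * tri m D a' c c1) • a)
    (h4' : ub' = β • c' - KF • a') :
    (K * (s * tri m D a' b c) * (s * tri m D a' b' c')) • c2 =
      tri m D c' ub' ub • c1 - tri m D c' ub' c1 • ub := by
  subst hKF h1 h1' h2 h3 h4 h4'
  funext i
  simp only [tri_lin, tri_lin2, tri_lin3, tri_z12, tri_z23, tri_z13, Pi.smul_apply, Pi.sub_apply,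
    smul_eq_mul]
  have n1 : tri m D a' a c = tri m D a c a' := tri_cyc m D _ _ _
  have n2 : tri m D a' b c = tri m D b c a' := tri_cyc m D _ _ _
  have n3 : ∀ x, tri m D b' a' x = - tri m D x a' b' := fun x => by
    rw [tri_swap, ← tri_cyc]
  have n4 : ∀ x, tri m D a' b' x = tri m D x a' b' := fun x => by
    rw [← tri_cyc]
  have n5 : ∀ x, tri m D c' a' x = - tri m D x a' c' := fun x => by
    rw [tri_swap, ← tri_cyc]
  have n6 : tri m D a' a b = tri m D a b a' := tri_cyc m D _ _ _
  have n7 : tri m D a' c b = - tri m D b c a' := by rw [tri_cyc, tri_swap]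
  have P3 := plucker m D b c a' b' a' c'
  have P4 := plucker m D a b c a' a' c'
  have P5 := plucker m D a b c a' a' b'
  rw [tri_z12, tri_swap m D b' a' c'] at P3
  rw [tri_z12] at P4 P5
  rw [n1, n2, n3 a, n3 b, n3 c, n4 b, n4 c, n5 a, n5 b, n5 c, n6, n7]
  linear_combination
    (K * F * s * tri m D b c a' * tri m D a' b' c' *
      ((tri m D a c a' * tri m D b a' b' - tri m D b c a' * tri m D a a' b') * c i
        - tri m D c a' b' * (tri m D a c a' * b i - tri m D b c a' * a i))) * hs
    + K * F * s * (
      (- (tri m D b c a' * tri m D a' b' c') * P5 + tri m D c a' b' * tri m D a b a' * P3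
        + tri m D c a' b' * tri m D b a' b' * P4) * c i
      + (- tri m D c a' b' * tri m D a c a' * P3 - tri m D c a' b' ^ 2 * P4) * b i
      + tri m D c a' b' * tri m D b c a' * a i * P3)

theorem blk_self (m n : ℕ) (w : ZMod n → Fin (m+3) → ℂ) (q : ZMod n)
    (h : (ZMod.val q) % (m+3) = 1 % (m+3)) :
    Blk m n w q (fun i => w (q + ((3 + i : ℕ) : ZMod n))) (w q) (w (q+1)) (w (q+2)) :=
  ⟨h, rfl, rfl, rfl, fun _ _ => rfl⟩

theorem core (m n : ℕ) [NeZero n] (hkn : (m+3) ∣ n) (v : ZMod n → Fin (m+3) → ℂ) (q : ZMod n)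
    (h0 : (ZMod.val q) % (m+3) = 1 % (m+3)) :
    artin (m+3) n 1 (artin (m+3) n 2 (artin (m+3) n 1 v)) q =
      artin (m+3) n 2 (artin (m+3) n 1 (artin (m+3) n 2 v)) q ∧
    artin (m+3) n 1 (artin (m+3) n 2 (artin (m+3) n 1 v)) (q+1) =
      (frozen (m+3) n v (q + ((m+3 : ℕ) : ZMod n) + 1) * frozen (m+3) n v q
        * frozen (m+3) n v (q+2)) •
      artin (m+3) n 2 (artin (m+3) n 1 (artin (m+3) n 2 v)) (q+1) ∧
    (frozen (m+3) n v (q + ((m+3 : ℕ) : ZMod n) + 2) * frozen (m+3) n v (q+1)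
        * frozen (m+3) n v (q+3)) •
      artin (m+3) n 1 (artin (m+3) n 2 (artin (m+3) n 1 v)) (q+2) =
      artin (m+3) n 2 (artin (m+3) n 1 (artin (m+3) n 2 v)) (q+2) := by
  have step : ∀ q : ZMod n, (ZMod.val q) % (m+3) = 1 % (m+3) →
      (ZMod.val (q + ((m+3 : ℕ) : ZMod n))) % (m+3) = 1 % (m+3) := by
    intro q h
    rw [res_add hkn q h (m+3), Nat.add_mod_right]
  have h1 := step q h0
  have h2 := step _ h1
  have h3 := step _ h2
  have B0 := blk_self m n v q h0
  have B1 := blk_self m n v _ h1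
  have B2 := blk_self m n v _ h2
  have B3 := blk_self m n v _ h3
  have fE := frozenE m n v q _ _ _ _ B0
  have fF := frozenF m n v q _ _ _ _ _ B0 rfl
  have fG := frozenG m n v q _ _ _ _ _ _ _ _ B0 B1
  have fH := frozenH m n v q _ _ _ _ _ _ _ _ B0 B1
  have fF' := frozenF m n v _ _ _ _ _ _ B1 rfl
  have fG' := frozenG m n v _ _ _ _ _ _ _ _ _ B1 B2
  rw [fE, fF, fG, fH, fF', fG']
  have V0 := blk_one m n hkn v _ _ _ _ _ _ B0 rfl
  have V1 := blk_one m n hkn v _ _ _ _ _ _ B1 rfl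
  have V2 := blk_self m n (artin (m+3) n 1 v) _ h2
  have W0 := blk_two m n hkn _ _ _ _ _ _ _ _ _ _ V0 V1
  have W1 := blk_two m n hkn _ _ _ _ _ _ _ _ _ _ V1 V2
  have X0 := blk_one m n hkn _ _ _ _ _ _ _ W0 W1.2.1
  have U0 := blk_two m n hkn v _ _ _ _ _ _ _ _ _ B0 B1
  have U1 := blk_two m n hkn v _ _ _ _ _ _ _ _ _ B1 B2
  have U2 := blk_two m n hkn v _ _ _ _ _ _ _ _ _ B2 B3
  have Y0 := blk_one m n hkn _ _ _ _ _ _ _ U0 U1.2.1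
  have Y1 := blk_one m n hkn _ _ _ _ _ _ _ U1 U2.2.1
  have Z0 := blk_two m n hkn _ _ _ _ _ _ _ _ _ _ Y0 Y1
  refine ⟨X0.2.1.trans Z0.2.1.symm, ?_, ?_⟩
  · rw [X0.2.2.1, Z0.2.2.1]
    exact algB m _ _ _ _ (sgn_sq m) _ _ _ _ _ _ _ _ _ rfl rfl rfl rfl
  · rw [X0.2.2.2.1, Z0.2.2.2.1]
    refine algC m _ _ _ _ _ _ _ ?_ (sgn_sq m) _ _ _ _ _ _ _ _ _ _ _ _ rfl rfl rfl rfl rfl rfl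
    rw [tri_lin3, tri_z23, tri_swap23 m _ _ (v (q + ((m+3 : ℕ) : ZMod n) + 2))
      (v (q + ((m+3 : ℕ) : ZMod n) + 1))]
    ring

/-- Braiding of adjacent Artin generators (part of Theorem 6.1):
`σ_1 ∘ σ_2 ∘ σ_1` and `σ_2 ∘ σ_1 ∘ σ_2` agree componentwise up to signs and
Laurent monomials in the frozen minors. -/
theorem adjacent_artin_generators_quasi_braided
    (k r n : ℕ) (hk : 3 ≤ k) (hr : 2 ≤ r) (hn : n = r * k) (j : ZMod n) :
    ∃ (ε : ℂ) (e : Fin n → ℤ), (ε = 1 ∨ ε = -1) ∧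
      ∀ v : ZMod n → Fin k → ℂ, Generic k n v →
        artin k n 1 (artin k n 2 (artin k n 1 v)) j
          = (ε * laurent k n e v) • artin k n 2 (artin k n 1 (artin k n 2 v)) j := by
  obtain ⟨m, rfl⟩ : ∃ m, k = m + 3 := ⟨k - 3, by omega⟩
  have hkn : (m+3) ∣ n := ⟨r, by rw [hn, mul_comm]⟩
  haveI : NeZero n := ⟨by rw [hn]; positivity⟩
  have hsub : ∀ t : ℕ, (ZMod.val j) % (m+3) = (1 + t) % (m+3) →
      (ZMod.val (j - (t : ZMod n))) % (m+3) = 1 % (m+3) := by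
    intro t ht
    rw [res_iff hkn] at ht ⊢
    rw [map_sub, ht, map_natCast]
    push_cast; ring
  by_cases c1 : (ZMod.val j) % (m+3) = 1 % (m+3)
  · refine ⟨1, 0, Or.inl rfl, fun v _ => ?_⟩
    rw [laurent_zero, one_mul, one_smul]
    exact (core m n hkn v j c1).1
  by_cases c2 : (ZMod.val j) % (m+3) = (1 + 1) % (m+3)
  · obtain ⟨q, rfl⟩ : ∃ q, j = q + 1 := ⟨j - 1, by ring⟩
    have hq := hsub 1 c2
    rw [Nat.cast_one, add_sub_cancel_right] at hq
    refine ⟨1, Pi.single ⟨ZMod.val (q + ((m+3 : ℕ) : ZMod n) + 1), ZMod.val_lt _⟩ 1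
      + Pi.single ⟨ZMod.val q, ZMod.val_lt _⟩ 1
      + Pi.single ⟨ZMod.val (q + 2), ZMod.val_lt _⟩ 1, Or.inl rfl, fun v hv => ?_⟩
    rw [laurent_add _ _ _ _ _ hv, laurent_add _ _ _ _ _ hv, laurent_single, laurent_single,
      laurent_single, one_mul]
    exact (core m n hkn v q hq).2.1
  by_cases c3 : (ZMod.val j) % (m+3) = (1 + 2) % (m+3)
  · obtain ⟨q, rfl⟩ : ∃ q, j = q + 2 := ⟨j - 2, by ring⟩
    have hq := hsub 2 c3
    rw [Nat.cast_ofNat, add_sub_cancel_right] at hq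
    refine ⟨1, -(Pi.single ⟨ZMod.val (q + ((m+3 : ℕ) : ZMod n) + 2), ZMod.val_lt _⟩ 1
      + Pi.single ⟨ZMod.val (q + 1), ZMod.val_lt _⟩ 1
      + Pi.single ⟨ZMod.val (q + 3), ZMod.val_lt _⟩ 1), Or.inl rfl, fun v hv => ?_⟩
    rw [laurent_neg, laurent_add _ _ _ _ _ hv, laurent_add _ _ _ _ _ hv, laurent_single,
      laurent_single, laurent_single, one_mul]
    rw [← (core m n hkn v q hq).2.2, inv_smul_smul₀]
    exact mul_ne_zero (mul_ne_zero (hv _) (hv _)) (hv _)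
  · refine ⟨1, 0, Or.inl rfl, fun v _ => ?_⟩
    rw [laurent_zero, one_mul, one_smul]
    have a1 : ∀ w, artin (m+3) n 1 w j = w j := fun w => by
      unfold artin; rw [if_neg c1, if_neg c2]
    have a2 : ∀ w, artin (m+3) n 2 w j = w j := fun w => by
      unfold artin; rw [if_neg c2, if_neg c3]
    simp only [a1, a2]

end
end

section
/- Proposition 8.2 (extra relation for n = 2k): Let k ≥ 2 and n = 2k. For a k-element subset I ⊆ ZMod n let Δ_I(v) denote the determinant of the k×k matrix whose columns are the vectors v_i for i ∈ I, listed in increasing order of their representatives in {0,1,…,n−1}, and let I−1 := {i−1 : i ∈ I}. Then for every k-element subset I ⊆ ZMod n there exist a sign ε ∈ {+1, −1} and a Laurent monomial M in the frozen minors (both independent of v) such that for every generic configuration v : ZMod n → (Fin k → ℂ), Δ_I((σ_1 ∘ σ_2 ∘ ⋯ ∘ σ_{k−1})(v)) = ε · M(v) · Δ_{I−1}(v). In other words, on Gr(k,2k) the composition σ_1 ∘ ⋯ ∘ σ_{k−1} acts as the inverse cyclic shift up to signs and Laurent monomials in the frozen minors. -/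
open scoped BigOperators

noncomputable section

section Helpers

/-- A function of configurations that is, up to sign, a Laurent monomial in frozen minors. -/
def IsMono (k n : ℕ) (F : (ZMod n → Fin k → ℂ) → ℂ) : Prop :=
  ∃ (ε : ℂ) (e : Fin n → ℤ), (ε = 1 ∨ ε = -1) ∧
    ∀ v : ZMod n → Fin k → ℂ, Generic k n v → F v = ε * laurent k n e v

theorem IsMono.congr {k n : ℕ} {F G : (ZMod n → Fin k → ℂ) → ℂ} (hF : IsMono k n F)
    (h : ∀ v, Generic k n v → G v = F v) : IsMono k n G := by
  obtain ⟨ε, e, h1, h2⟩ := hF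
  exact ⟨ε, e, h1, fun v hv => (h v hv).trans (h2 v hv)⟩

theorem isMono_const (k n : ℕ) {ε : ℂ} (h : ε = 1 ∨ ε = -1) : IsMono k n (fun _ => ε) :=
  ⟨ε, 0, h, fun v _ => by simp [laurent]⟩

theorem isMono_frozen (k n : ℕ) [NeZero n] (m : ZMod n) :
    IsMono k n (fun v => frozen k n v m) := by
  refine ⟨1, Pi.single ⟨m.val, ZMod.val_lt m⟩ 1, Or.inl rfl, fun v _ => ?_⟩
  rw [laurent, Finset.prod_eq_single (⟨m.val, ZMod.val_lt m⟩ : Fin n)]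
  · simp
  · intro b _ hb
    simp [Pi.single_eq_of_ne hb]
  · simp

theorem IsMono.mul {k n : ℕ} {F G : (ZMod n → Fin k → ℂ) → ℂ} (hF : IsMono k n F)
    (hG : IsMono k n G) : IsMono k n (fun v => F v * G v) := by
  obtain ⟨ε, e, h1, h2⟩ := hF
  obtain ⟨ε', e', h1', h2'⟩ := hG
  refine ⟨ε * ε', e + e', ?_, fun v hv => ?_⟩
  · rcases h1 with rfl | rfl <;> rcases h1' with rfl | rfl <;> simp
  · have : laurent k n (e + e') v = laurent k n e v * laurent k n e' v := by
      simp only [laurent, ← Finset.prod_mul_distrib]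
      exact Finset.prod_congr rfl fun m _ => by rw [Pi.add_apply, zpow_add₀ (hv _)]
    beta_reduce
    rw [h2 v hv, h2' v hv, this]
    ring

theorem IsMono.inv {k n : ℕ} {F : (ZMod n → Fin k → ℂ) → ℂ} (hF : IsMono k n F) :
    IsMono k n (fun v => (F v)⁻¹) := by
  obtain ⟨ε, e, h1, h2⟩ := hF
  refine ⟨ε, -e, h1, fun v hv => ?_⟩
  have h3 : ε⁻¹ = ε := by rcases h1 with rfl | rfl <;> norm_num
  beta_reduce
  rw [h2 v hv, mul_inv, h3]
  simp [laurent]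

theorem IsMono.neg {k n : ℕ} {F : (ZMod n → Fin k → ℂ) → ℂ} (hF : IsMono k n F) :
    IsMono k n (fun v => - F v) :=
  ((isMono_const k n (Or.inr rfl)).mul hF).congr fun v _ => by simp

theorem isMono_prod {k n : ℕ} {ι : Type*} (s : Finset ι)
    (F : ι → (ZMod n → Fin k → ℂ) → ℂ) (hF : ∀ i, IsMono k n (F i)) :
    IsMono k n (fun v => ∏ i ∈ s, F i v) := by
  classical
  induction s using Finset.induction_on with
  | empty => simpa using isMono_const k n (Or.inl rfl)
  | insert a s ha ih =>
    exact ((hF a).mul ih).congr fun v _ => by rw [Finset.prod_insert ha]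

theorem IsMono.ne_zero {k n : ℕ} {F : (ZMod n → Fin k → ℂ) → ℂ} (hF : IsMono k n F)
    (v : ZMod n → Fin k → ℂ) (hv : Generic k n v) : F v ≠ 0 := by
  obtain ⟨ε, e, h1, h2⟩ := hF
  rw [h2 v hv]
  refine mul_ne_zero (by rcases h1 with rfl | rfl <;> norm_num) ?_
  exact Finset.prod_ne_zero_iff.2 fun m _ => zpow_ne_zero _ (hv _)

theorem colDet_eq_det_of {k : ℕ} (c : Fin k → Fin k → ℂ) : colDet c = (Matrix.of c).det := by
  rw [← Matrix.det_transpose]; rfl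

theorem colDet_mulVec {k : ℕ} (g : Matrix (Fin k) (Fin k) ℂ) (c : Fin k → Fin k → ℂ) :
    colDet (fun b => g.mulVec (c b)) = g.det * colDet c := by
  rw [colDet, colDet, ← Matrix.det_mul]
  rfl

/-- Functional evaluation of a determinant whose other columns lie in a hyperplane. -/
theorem colDet_key {k : ℕ} (i : Fin k) (φ y z : Fin k → ℂ) (c : Fin k → Fin k → ℂ)
    (hz : φ ⬝ᵥ z = 1) (hc : ∀ b, b ≠ i → φ ⬝ᵥ c b = 0) :
    colDet (Function.update c i y) = (φ ⬝ᵥ y) * colDet (Function.update c i z) := by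
  have h0 : (Matrix.updateRow (Matrix.of c) i (y - (φ ⬝ᵥ y) • z)).det = 0 := by
    rw [← Matrix.exists_mulVec_eq_zero_iff]
    refine ⟨φ, ?_, ?_⟩
    · rintro rfl
      simp at hz
    · ext b
      by_cases hb : b = i
      · subst hb
        simp only [Matrix.mulVec, Matrix.updateRow_self, Pi.zero_apply]
        rw [dotProduct_comm, dotProduct_sub, dotProduct_smul, hz]
        simp
      · simp only [Matrix.mulVec, Matrix.updateRow_ne hb, Pi.zero_apply]
        rw [dotProduct_comm]
        exact hc b hb
  have h1 : y = (y - (φ ⬝ᵥ y) • z) + (φ ⬝ᵥ y) • z := by simp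
  rw [colDet_eq_det_of, colDet_eq_det_of]
  change (Matrix.updateRow (Matrix.of c) i y).det
    = _ * (Matrix.updateRow (Matrix.of c) i z).det
  conv_lhs => rw [h1]
  rw [Matrix.det_updateRow_add, Matrix.det_updateRow_smul, h0, zero_add]

theorem colDet_shear {k : ℕ} (i : Fin k) (c w : Fin k → Fin k → ℂ) (r μ : Fin k → ℂ)
    (hi : μ i = 0) (hc : ∀ b, c b = r b • (w b - μ b • w i)) :
    colDet c = (∏ b, r b) * colDet w := by
  rw [colDet_eq_det_of, colDet_eq_det_of]
  have h1 : (Matrix.of fun b a => w b a - μ b * w i a).det = (Matrix.of w).det :=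
    Matrix.det_eq_of_forall_row_eq_smul_add_const (fun b => - μ b) i (by simp [hi])
      (fun b a => by simp; ring)
  rw [← h1, ← Matrix.det_mul_column]
  congr 1
  ext b a
  simp [hc]

/-- Moving the vector at the anchor `q` into its cyclic position costs only a sign. -/
theorem colDet_cycle {k n : ℕ} (v : ZMod n → Fin k → ℂ) (q : ZMod n) (t : Fin k) :
    colDet (fun b : Fin k => if (b : ℕ) = 0 then v q
      else if (b : ℕ) ≤ t then v (q - ((t : ℕ) : ZMod n) + ((b : ℕ) : ZMod n) - 1)
      else v (q - ((t : ℕ) : ZMod n) + ((b : ℕ) : ZMod n)))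
    = ((Equiv.Perm.sign (Fin.cycleRange t) : ℤ) : ℂ) * frozen k n v (q - ((t : ℕ) : ZMod n)) := by
  set c : Fin k → Fin k → ℂ := fun b : Fin k => if (b : ℕ) = 0 then v q
      else if (b : ℕ) ≤ t then v (q - ((t : ℕ) : ZMod n) + ((b : ℕ) : ZMod n) - 1)
      else v (q - ((t : ℕ) : ZMod n) + ((b : ℕ) : ZMod n)) with hc
  have h2 : frozen k n v (q - ((t : ℕ) : ZMod n)) = colDet (fun b => c (Fin.cycleRange t b)) := by
    unfold frozen
    congr 1
    funext b
    rcases lt_trichotomy b t with h | h | h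
    · have e := Fin.coe_cycleRange_of_lt h
      have : (b : ℕ) < t := h
      simp only [hc, e]
      rw [if_neg (by omega), if_pos (by omega)]
      congr 1
      push_cast
      ring
    · subst h
      have e : (Fin.cycleRange b b : ℕ) = 0 := by
        rw [Fin.coe_cycleRange_of_le le_rfl, if_pos rfl]
      simp only [hc, e]
      simp
    · have e := Fin.cycleRange_of_gt h
      have : (t : ℕ) < b := h
      simp only [hc, e]
      rw [if_neg (by omega), if_neg (by omega)]
  have h3 : colDet (fun b => c (Fin.cycleRange t b))
      = ((Equiv.Perm.sign (Fin.cycleRange t) : ℤ) : ℂ) * colDet c := by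
    rw [colDet_eq_det_of, colDet_eq_det_of, ← Matrix.det_permute]
    rfl
  rw [h2, h3, ← mul_assoc]
  rcases Int.units_eq_one_or (Equiv.Perm.sign (Fin.cycleRange t)) with h | h <;> simp [h]

theorem sign_cases {k : ℕ} (s : Equiv.Perm (Fin k)) :
    ((Equiv.Perm.sign s : ℤ) : ℂ) = 1 ∨ ((Equiv.Perm.sign s : ℤ) : ℂ) = -1 := by
  rcases Int.units_eq_one_or (Equiv.Perm.sign s) with h | h <;> simp [h]

/-- The functional dual to `v q` vanishing on `v (q+1), …, v (q+k-1)`. -/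
def phi (k n : ℕ) [NeZero k] (v : ZMod n → Fin k → ℂ) (q : ZMod n) : Fin k → ℂ :=
  (Matrix.of fun a (b : Fin k) => v (q + ((b : ℕ) : ZMod n)) a)⁻¹ 0

theorem phi_col {k n : ℕ} [NeZero k] {v : ZMod n → Fin k → ℂ} (hv : Generic k n v)
    (q : ZMod n) (b : Fin k) :
    phi k n v q ⬝ᵥ v (q + ((b : ℕ) : ZMod n)) = if b = 0 then 1 else 0 := by
  have h := Matrix.nonsing_inv_mul (Matrix.of fun a (b : Fin k) => v (q + ((b : ℕ) : ZMod n)) a)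
    (isUnit_iff_ne_zero.2 (hv q))
  have h2 := congrFun (congrFun h 0) b
  rw [Matrix.one_apply] at h2
  simp only [eq_comm (a := b)]
  exact h2

theorem phi_self {k n : ℕ} [NeZero k] {v : ZMod n → Fin k → ℂ} (hv : Generic k n v)
    (q : ZMod n) : phi k n v q ⬝ᵥ v q = 1 := by
  simpa using phi_col hv q 0

theorem phi_ne {k n : ℕ} [NeZero k] {v : ZMod n → Fin k → ℂ} (hv : Generic k n v)
    (q : ZMod n) (b : ℕ) (h0 : b ≠ 0) (hb : b < k) :
    phi k n v q ⬝ᵥ v (q + (b : ZMod n)) = 0 := by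
  have := phi_col hv q ⟨b, hb⟩
  rwa [if_neg (by simpa [Fin.ext_iff] using h0)] at this

theorem val_ne_of_ne {k : ℕ} [NeZero k] {b : Fin k} (h : b ≠ 0) : (b : ℕ) ≠ 0 :=
  fun h' => h (Fin.ext (by rw [h', Fin.val_zero]))

theorem isMono_phi {k n : ℕ} [NeZero k] [NeZero n] (q : ZMod n) :
    IsMono k n (fun v => phi k n v q ⬝ᵥ v (q + (k : ZMod n))) := by
  have hk : 0 < k := Nat.pos_of_ne_zero (NeZero.ne k)
  refine (((isMono_const k n
    (sign_cases (Fin.cycleRange (⟨k - 1, by omega⟩ : Fin k)))).mul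
    (isMono_frozen k n (q + 1))).mul (isMono_frozen k n q).inv).congr fun v hv => ?_
  rw [eq_mul_inv_iff_mul_eq₀ (hv q)]
  have h := colDet_key (0 : Fin k) (phi k n v q) (v (q + (k : ZMod n))) (v q)
    (fun b => v (q + ((b : ℕ) : ZMod n))) (phi_self hv q)
    (fun b hb => by rw [phi_col hv, if_neg hb])
  have h1 : (Function.update (fun b : Fin k => v (q + ((b : ℕ) : ZMod n))) 0 (v q))
      = fun b : Fin k => v (q + ((b : ℕ) : ZMod n)) := by
    rw [Function.update_eq_self_iff, Fin.val_zero, Nat.cast_zero, add_zero]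
  have hq : q + (k : ZMod n) - ((k - 1 : ℕ) : ZMod n) = q + 1 := by
    rw [Nat.cast_sub hk]; push_cast; ring
  have h2 := colDet_cycle v (q + (k : ZMod n)) ⟨k - 1, by omega⟩
  simp only [hq] at h2
  rw [h1] at h
  rw [← h2]
  unfold frozen
  rw [← h]
  congr 1
  funext b
  have hb := b.isLt
  by_cases h0 : b = 0
  · subst h0; rw [Function.update_self, if_pos (Fin.val_zero k)]
  · have h0' : (b : ℕ) ≠ 0 := val_ne_of_ne h0
    rw [Function.update_of_ne h0, if_neg h0', if_pos (by omega)]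
    congr 1
    ring

/-- Anchors: positions divisible by `k`. -/
def Anchor (k n : ℕ) (q : ZMod n) : Prop := q.val % k = 0

theorem val_mod_iff {k n : ℕ} [NeZero n] (hd : k ∣ n) (j : ZMod n) (i : ℕ) :
    j.val % k = i % k ↔ ZMod.castHom hd (ZMod k) j = (i : ZMod k) := by
  rw [← ZMod.natCast_eq_natCast_iff', ZMod.castHom_apply, ZMod.natCast_val]

theorem anchor_iff {k n : ℕ} [NeZero n] (hd : k ∣ n) (q : ZMod n) :
    Anchor k n q ↔ ZMod.castHom hd (ZMod k) q = 0 := by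
  have := val_mod_iff hd q 0
  simpa [Anchor] using this

theorem anchor_sub_mod {k n : ℕ} [NeZero n] (hd : k ∣ n) {q : ZMod n} (hq : Anchor k n q)
    (s i : ℕ) (hi : i ≤ k) :
    (q - (s : ZMod n)).val % k = (k - i) % k ↔ s % k = i % k := by
  rw [val_mod_iff hd, map_sub, (anchor_iff hd q).1 hq, map_natCast, Nat.cast_sub hi,
    ← ZMod.natCast_eq_natCast_iff']
  simp

theorem anchor_add {k n : ℕ} [NeZero n] (hd : k ∣ n) {q : ZMod n} (hq : Anchor k n q) :
    Anchor k n (q + (k : ZMod n)) := by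
  rw [anchor_iff hd] at hq ⊢
  rw [map_add, hq, map_natCast]
  simp

/-- The configuration after the first `t` generators have been applied. -/
def Stage (k n : ℕ) [NeZero k] (v : ZMod n → Fin k → ℂ) (a : ZMod n → ℕ → ℂ) (t : ℕ)
    (u : ZMod n → Fin k → ℂ) : Prop :=
  ∀ q : ZMod n, Anchor k n q →
    u (q - (t : ZMod n)) = v q ∧
    (∀ s : ℕ, 1 ≤ s → s ≤ t → u (q - (s : ZMod n) + 1) =
      a q s • (v (q - (s : ZMod n)) - (phi k n v q ⬝ᵥ v (q - (s : ZMod n))) • v q)) ∧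
    (∀ s : ℕ, t < s → s < k → u (q - (s : ZMod n)) = v (q - (s : ZMod n)))

/-- The new scalar created at step `t + 1`. -/
def newCoef (k n : ℕ) (a : ℕ → ℂ) (t : Fin k) (v : ZMod n → Fin k → ℂ)
    (q : ZMod n) : ℂ :=
  -((∏ b : Fin k, if (b : ℕ) = 0 then 1 else if (b : ℕ) ≤ t then a ((t : ℕ) + 1 - b) else 1) *
    (((Equiv.Perm.sign (Fin.cycleRange t) : ℤ) : ℂ) * frozen k n v (q - ((t : ℕ) : ZMod n))))

theorem stage_step {k n : ℕ} [NeZero k] [NeZero n] (hn : n = 2 * k)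
    {v : ZMod n → Fin k → ℂ} (hv : Generic k n v) (a : ZMod n → ℕ → ℂ) (t : ℕ)
    (ht : t + 1 < k) {u : ZMod n → Fin k → ℂ} (hu : Stage k n v a t u) :
    Stage k n v (fun q s => if s = t + 1 then newCoef k n (a q) ⟨t, by omega⟩ v q else a q s)
      (t + 1) (artin k n (k - (t + 1)) u) := by
  have hd : k ∣ n := ⟨2, by rw [hn, mul_comm]⟩
  have hkn : (k : ZMod n) + k = 0 := by
    have : ((2 * k : ℕ) : ZMod n) = 0 := by rw [← hn]; simp
    rw [← this]; push_cast; ring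
  have hi2 : k - (t + 1) + 1 = k - t := by omega
  have hmod : ∀ s : ℕ, s < k → s % k = s := fun s hs => Nat.mod_eq_of_lt hs
  intro q hq
  obtain ⟨h1, h2, h3⟩ := hu q hq
  obtain ⟨-, -, h3'⟩ := hu _ (anchor_add hd hq)
  refine ⟨?_, ?_, ?_⟩
  · rw [artin, if_pos ((anchor_sub_mod hd hq (t + 1) (t + 1) ht.le).2 rfl), ← h1]
    congr 1
    push_cast; ring
  · intro s hs1 hs2
    have hpos : q - (s : ZMod n) + 1 = q - ((s - 1 : ℕ) : ZMod n) := by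
      rw [Nat.cast_sub hs1]; push_cast; ring
    have hc1 : ¬ ((q - ((s - 1 : ℕ) : ZMod n)).val % k = (k - (t + 1)) % k) := by
      rw [anchor_sub_mod hd hq _ _ ht.le, hmod _ (by omega), hmod _ (by omega)]
      omega
    by_cases hst : s = t + 1
    · subst hst
      have hc2 : (q - ((t + 1 - 1 : ℕ) : ZMod n)).val % k = (k - (t + 1) + 1) % k := by
        rw [hi2, anchor_sub_mod hd hq _ _ (by omega)]
        simp
      beta_reduce
      rw [hpos, artin, if_neg hc1, if_pos hc2, if_pos rfl]
      simp only [Nat.add_sub_cancel]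
      have e1 : q - (t : ZMod n) - 1 = q - ((t + 1 : ℕ) : ZMod n) := by push_cast; ring
      rw [h1, e1, h3 (t + 1) (by omega) (by omega)]
      -- the columns at this stage
      set c : Fin k → Fin k → ℂ := fun b => u (q - (t : ZMod n) + ((b : ℕ) : ZMod n)) with hc
      set y := v (q - ((t + 1 : ℕ) : ZMod n)) with hy
      have hc0 : c 0 = v q := by
        simp only [hc]
        rw [Fin.val_zero, Nat.cast_zero, add_zero, h1]
      have hcb : ∀ b : Fin k, b ≠ 0 → (b : ℕ) ≤ t → c b = a q (t + 1 - b) •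
          (v (q - (t : ZMod n) + ((b : ℕ) : ZMod n) - 1)
            - (phi k n v q ⬝ᵥ v (q - (t : ZMod n) + ((b : ℕ) : ZMod n) - 1)) • v q) := by
        intro b hb hbt
        have hb0 : (b : ℕ) ≠ 0 := val_ne_of_ne hb
        have e2 : q - (t : ZMod n) + ((b : ℕ) : ZMod n) - 1
            = q - ((t + 1 - b : ℕ) : ZMod n) := by
          rw [Nat.cast_sub (by omega)]; push_cast; ring
        rw [e2, ← h2 (t + 1 - b) (by omega) (by omega), ← e2]
        simp [hc]
      have hcb' : ∀ b : Fin k, t < (b : ℕ) → c b = v (q - (t : ZMod n) + ((b : ℕ) : ZMod n)) := by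
        intro b hbt
        have hbk := b.isLt
        have e2 : q - (t : ZMod n) + ((b : ℕ) : ZMod n)
            = q + (k : ZMod n) - ((k + t - b : ℕ) : ZMod n) := by
          rw [Nat.cast_sub (by omega)]; push_cast; ring
        simp only [hc]
        rw [e2, h3' (k + t - b) (by omega) (by omega)]
      have hphi : ∀ b : Fin k, b ≠ 0 → phi k n v q ⬝ᵥ c b = 0 := by
        intro b hb
        by_cases hbt : (b : ℕ) ≤ t
        · rw [hcb b hb hbt, dotProduct_smul, dotProduct_sub, dotProduct_smul, phi_self hv]
          simp
        · rw [hcb' b (by omega)]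
          have e2 : q - (t : ZMod n) + ((b : ℕ) : ZMod n) = q + ((b - t : ℕ) : ZMod n) := by
            rw [Nat.cast_sub (by omega)]; ring
          rw [e2]
          exact phi_ne hv q _ (by omega) (by omega)
      have hD1 : colDet (fun b : Fin k => if (b : ℕ) = 0 then y
          else u (q - (t : ZMod n) + ((b : ℕ) : ZMod n))) = (phi k n v q ⬝ᵥ y) * colDet c := by
        have h := colDet_key 0 (phi k n v q) y (v q) c (phi_self hv q) hphi
        rw [← hc0, Function.update_eq_self] at h
        rw [← h]
        congr 1
        funext b
        by_cases hb : b = 0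
        · subst hb; simp
        · rw [Function.update_of_ne hb, if_neg (val_ne_of_ne hb)]
      have hD2 : colDet c = - newCoef k n (a q) ⟨t, by omega⟩ v q := by
        rw [newCoef, neg_neg, ← colDet_cycle]
        refine colDet_shear 0 _ _ _ (fun b => if (b : ℕ) = 0 then 0 else if (b : ℕ) ≤ t then
          phi k n v q ⬝ᵥ v (q - (t : ZMod n) + ((b : ℕ) : ZMod n) - 1) else 0) (by simp) ?_
        intro b
        by_cases hb : b = 0
        · subst hb; simp [hc0]
        · have hb0 : (b : ℕ) ≠ 0 := val_ne_of_ne hb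
          by_cases hbt : (b : ℕ) ≤ t
          · simp only [hb0, hbt, if_true, if_false, Fin.val_zero]
            rw [hcb b hb hbt]
          · simp only [hb0, hbt, if_false, hcb' b (by omega)]
            simp
      have hfr : frozen k n u (q - (t : ZMod n)) = colDet c := rfl
      rw [hD1, hfr, hD2]
      ext x
      simp only [Pi.sub_apply, Pi.smul_apply, smul_eq_mul]
      ring
    · have hc2 : ¬ ((q - ((s - 1 : ℕ) : ZMod n)).val % k = (k - (t + 1) + 1) % k) := by
        rw [hi2, anchor_sub_mod hd hq _ _ (by omega), hmod _ (by omega), hmod _ (by omega)]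
        omega
      beta_reduce
      rw [hpos, artin, if_neg hc1, if_neg hc2, if_neg hst, ← hpos]
      exact h2 s hs1 (by omega)
  · intro s hs1 hs2
    have hc1 : ¬ ((q - (s : ZMod n)).val % k = (k - (t + 1)) % k) := by
      rw [anchor_sub_mod hd hq _ _ ht.le, hmod _ (by omega), hmod _ (by omega)]
      omega
    have hc2 : ¬ ((q - (s : ZMod n)).val % k = (k - (t + 1) + 1) % k) := by
      rw [hi2, anchor_sub_mod hd hq _ _ (by omega), hmod _ (by omega), hmod _ (by omega)]
      omega
    rw [artin, if_neg hc1, if_neg hc2]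
    exact h3 s (by omega) hs2

theorem stage_all {k n : ℕ} [NeZero k] [NeZero n] (hn : n = 2 * k) (t : ℕ) (ht : t < k) :
    ∃ a : ZMod n → ℕ → (ZMod n → Fin k → ℂ) → ℂ, (∀ q s, IsMono k n (a q s)) ∧
      ∀ v, Generic k n v → ∃ u, Stage k n v (fun q s => a q s v) t u ∧
        artinCompRev k n (k - 1) v = artinCompRev k n (k - 1 - t) u := by
  induction t with
  | zero =>
    refine ⟨fun _ _ _ => 1, fun _ _ => isMono_const k n (Or.inl rfl), fun v hv => ⟨v, ?_, rfl⟩⟩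
    intro q hq
    refine ⟨by simp, fun s h1 h2 => by omega, fun s _ _ => rfl⟩
  | succ t ih =>
    obtain ⟨a, ha, h⟩ := ih (by omega)
    refine ⟨fun q s v => if s = t + 1 then
      newCoef k n (fun s => a q s v) ⟨t, by omega⟩ v q else a q s v, ?_, ?_⟩
    · intro q s
      by_cases hs : s = t + 1
      · simp only [hs, if_true]
        unfold newCoef
        refine IsMono.neg (IsMono.mul (isMono_prod _ _ fun b => ?_)
          ((isMono_const k n (sign_cases _)).mul (isMono_frozen k n _)))
        split_ifs
        · exact isMono_const k n (Or.inl rfl)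
        · exact ha _ _
        · exact isMono_const k n (Or.inl rfl)
      · simpa only [hs, if_false] using ha q s
    · intro v hv
      obtain ⟨u, hu1, hu2⟩ := h v hv
      refine ⟨_, stage_step hn hv _ t ht hu1, ?_⟩
      have e : k - 1 - t = (k - 1 - (t + 1)) + 1 := by omega
      have e' : k - (t + 1) = (k - 1 - (t + 1)) + 1 := by omega
      rw [hu2, e, e']
      rfl

/-- The linear map realising the inverse cyclic shift. -/
def gMat (k n : ℕ) [NeZero k] (v : ZMod n → Fin k → ℂ) : Matrix (Fin k) (Fin k) ℂ :=
  1 - (Matrix.of fun (i : Fin k) (j : Fin 2) => if j = 0 then v 0 i else v (k : ZMod n) i) *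
    (Matrix.of fun (j : Fin 2) (i : Fin k) =>
      if j = 0 then phi k n v 0 i else phi k n v (k : ZMod n) i)

theorem gMat_mulVec {k n : ℕ} [NeZero k] (v : ZMod n → Fin k → ℂ) (y : Fin k → ℂ) :
    (gMat k n v).mulVec y = y - (phi k n v 0 ⬝ᵥ y) • v 0
      - (phi k n v (k : ZMod n) ⬝ᵥ y) • v (k : ZMod n) := by
  rw [gMat, Matrix.sub_mulVec, Matrix.one_mulVec, ← Matrix.mulVec_mulVec]
  ext i
  simp only [Pi.sub_apply, Pi.smul_apply, smul_eq_mul]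
  rw [Matrix.mulVec, dotProduct, Fin.sum_univ_two]
  simp [Matrix.mulVec]
  ring

theorem gMat_det {k n : ℕ} [NeZero k] {v : ZMod n → Fin k → ℂ} (hv : Generic k n v) :
    (gMat k n v).det
      = -((phi k n v 0 ⬝ᵥ v (k : ZMod n)) * (phi k n v (k : ZMod n) ⬝ᵥ v 0)) := by
  rw [gMat, Matrix.det_one_sub_mul_comm, Matrix.det_fin_two]
  have h1 := phi_self hv 0
  have h2 := phi_self hv (k : ZMod n)
  simp only [dotProduct] at h1 h2
  simp [Matrix.mul_apply, dotProduct, h1, h2]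

theorem exists_anchor {k n : ℕ} [NeZero k] [NeZero n] (hn : n = 2 * k) (j : ZMod n) :
    ∃ (q : ZMod n) (s : ℕ), (q = 0 ∨ q = (k : ZMod n)) ∧ 1 ≤ s ∧ s ≤ k ∧
      j = q - (s : ZMod n) + 1 := by
  have hkn : (k : ZMod n) + k = 0 := by
    have : ((2 * k : ℕ) : ZMod n) = 0 := by rw [← hn]; simp
    rw [← this]; push_cast; ring
  have hm : (((j - 1).val : ℕ) : ZMod n) = j - 1 := by simp
  have hlt := ZMod.val_lt (j - 1)
  by_cases h : (j - 1).val < k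
  · refine ⟨k, k - (j - 1).val, Or.inr rfl, by omega, by omega, ?_⟩
    rw [Nat.cast_sub h.le, hm]; ring
  · refine ⟨0, 2 * k - (j - 1).val, Or.inl rfl, by omega, by omega, ?_⟩
    rw [Nat.cast_sub (by omega), hm]; push_cast
    linear_combination hkn

theorem exists_scalar {k n : ℕ} [NeZero k] [NeZero n] (hn : n = 2 * k) (j : ZMod n) :
    ∃ C : (ZMod n → Fin k → ℂ) → ℂ, IsMono k n C ∧ ∀ v, Generic k n v →
      artinCompRev k n (k - 1) v j = C v • (gMat k n v).mulVec (v (j - 1)) := by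
  have hk : 0 < k := Nat.pos_of_ne_zero (NeZero.ne k)
  have hd : k ∣ n := ⟨2, by rw [hn, mul_comm]⟩
  have hkn : (k : ZMod n) + k = 0 := by
    have : ((2 * k : ℕ) : ZMod n) = 0 := by rw [← hn]; simp
    rw [← this]; push_cast; ring
  obtain ⟨a, ha, h⟩ := stage_all hn (k - 1) (by omega)
  obtain ⟨q, s, hq, hs1, hsk, hj⟩ := exists_anchor hn j
  have hg : ∀ (v : ZMod n → Fin k → ℂ) (y : Fin k → ℂ), (gMat k n v).mulVec y
      = y - (phi k n v q ⬝ᵥ y) • v q - (phi k n v (q + k) ⬝ᵥ y) • v (q + k) := by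
    intro v y
    rw [gMat_mulVec]
    rcases hq with rfl | rfl
    · rw [zero_add]
    · rw [hkn, sub_right_comm]
  have hqa : Anchor k n q := by
    rw [anchor_iff hd]
    rcases hq with rfl | rfl
    · simp
    · rw [map_natCast]; simp
  have hj1 : j - 1 = q - (s : ZMod n) := by rw [hj]; ring
  by_cases hs : s = k
  · subst hs
    have e1 : q - (s : ZMod n) = q + (s : ZMod n) := by linear_combination -hkn
    refine ⟨fun v => -(phi s n v q ⬝ᵥ v (q + (s : ZMod n)))⁻¹, (isMono_phi q).inv.neg, ?_⟩
    intro v hv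
    obtain ⟨u, hu, hu2⟩ := h v hv
    have h1 := (hu q hqa).1
    have e2 : q - ((s - 1 : ℕ) : ZMod n) = j := by
      rw [Nat.cast_sub hk, hj]; push_cast; ring
    rw [hu2, Nat.sub_self, artinCompRev, ← e2, h1, e2, hj1, e1, hg, phi_self hv]
    have hne := (isMono_phi (k := s) q).ne_zero v hv
    ext x
    simp only [Pi.sub_apply, Pi.smul_apply, smul_eq_mul]
    field_simp
    ring
  · refine ⟨a q s, ha q s, ?_⟩
    intro v hv
    obtain ⟨u, hu, hu2⟩ := h v hv
    have h1 := (hu q hqa).2.1 s hs1 (by omega)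
    have e1 : q - (s : ZMod n) = q + (k : ZMod n) + ((k - s : ℕ) : ZMod n) := by
      rw [Nat.cast_sub hsk]; linear_combination -hkn
    have h0 : phi k n v (q + k) ⬝ᵥ v (q - (s : ZMod n)) = 0 := by
      rw [e1]; exact phi_ne hv _ _ (by omega) (by omega)
    rw [hu2, Nat.sub_self, artinCompRev, hj1, hg, h0, hj, h1]
    simp

end Helpers

/-- Proposition 8.2 (extra relation for `n = 2k`): a `k`-element subset
`I ⊆ ZMod n` is encoded by a strictly increasing map `f : Fin k → Fin n`
listing the representatives of its elements in increasing order, and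
`Δ_I(v) = colDet (fun b => v (f b))`.  On `Gr(k, 2k)` the composition
`σ_1 ∘ σ_2 ∘ ⋯ ∘ σ_{k−1}` acts as the inverse cyclic shift `I ↦ I − 1`,
up to signs and Laurent monomials in the frozen minors. -/
theorem extra_relation_for_n_eq_two_k
    (k n : ℕ) (hk : 2 ≤ k) (hn : n = 2 * k)
    (f : Fin k → Fin n) (hf : StrictMono f) :
    ∃ (ε : ℂ) (e : Fin n → ℤ), (ε = 1 ∨ ε = -1) ∧
      ∀ v : ZMod n → Fin k → ℂ, Generic k n v →
        colDet (fun b : Fin k =>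
            artinCompRev k n (k - 1) v (((f b : ℕ) : ZMod n)))
          = (ε * laurent k n e v) *
            colDet (fun b : Fin k => v (((f b : ℕ) : ZMod n) - 1)) := by
  have : NeZero k := ⟨by omega⟩
  have : NeZero n := ⟨by omega⟩
  choose C hC hCv using fun j : ZMod n => exists_scalar (k := k) hn j
  have hmono : IsMono k n (fun v => (∏ b : Fin k, C ((f b : ℕ) : ZMod n) v) *
      (-((phi k n v 0 ⬝ᵥ v (k : ZMod n)) * (phi k n v (k : ZMod n) ⬝ᵥ v 0)))) := by
    have hkn : (k : ZMod n) + k = 0 := by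
      have : ((2 * k : ℕ) : ZMod n) = 0 := by rw [← hn]; simp
      rw [← this]; push_cast; ring
    refine (isMono_prod _ _ fun b => hC _).mul (IsMono.neg (IsMono.mul ?_ ?_))
    · simpa using isMono_phi (k := k) (0 : ZMod n)
    · simpa [hkn] using isMono_phi (k := k) (k : ZMod n)
  obtain ⟨ε, e, hε, h⟩ := hmono
  refine ⟨ε, e, hε, fun v hv => ?_⟩
  rw [← h v hv]
  beta_reduce
  rw [← gMat_det hv, mul_assoc, ← colDet_mulVec]
  have hs : (fun b : Fin k => artinCompRev k n (k - 1) v (((f b : ℕ) : ZMod n)))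
      = fun b => C ((f b : ℕ) : ZMod n) v •
        (gMat k n v).mulVec (v (((f b : ℕ) : ZMod n) - 1)) := by
    funext b
    exact hCv _ v hv
  rw [hs]
  exact Matrix.det_mul_row _ _

end
end

section
/- Half-twist window formula (first part of Proposition 8.1): Let k ≥ 2, r ≥ 2, n = rk. Let H := σ_1 ∘ (σ_2 ∘ σ_1) ∘ (σ_3 ∘ σ_2 ∘ σ_1) ∘ ⋯ ∘ (σ_{k−1} ∘ ⋯ ∘ σ_1) be the half-twist composition of Artin generators. Define the k-periodic map W on configurations whose window notation is [v_k, (v_{k−1} v_k) ∩ (v_{k+1} ⋯ v_{2k−1}), (v_{k−2} v_{k−1} v_k) ∩ (v_{k+1} ⋯ v_{2k−2}), …, (v_2 v_3 ⋯ v_k) ∩ (v_{k+1} v_{k+2}), v_{k+1}]; explicitly, W(v)_j = v_{j+k−1} if j ≡ 1 (mod k), W(v)_j = v_{j+1} if j ≡ 0 (mod k), and for j ≡ ℓ (mod k) with 2 ≤ ℓ ≤ k−1, W(v)_j is the degree-one Grassmann–Cayley meet of the ℓ vectors v_{j+k−2ℓ+1}, v_{j+k−2ℓ+2}, …, v_{j+k−ℓ}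 with the k+1−ℓ vectors v_{j+k−ℓ+1}, …, v_{j+2k−2ℓ+1}. Then for every index j ∈ ZMod n there exist a sign ε_j ∈ {+1, −1} and a Laurent monomial M_j in the frozen minors (both independent of v) such that for every generic configuration v, the j-th vector of H(v) equals ε_j · M_j(v) · W(v)_j. -/
open scoped BigOperators

noncomputable section

/-- The half-twist `H = σ_1 ∘ (σ_2 ∘ σ_1) ∘ ⋯ ∘ (σ_m ∘ ⋯ ∘ σ_1)`. -/
def halfTwist (k n : ℕ) : ℕ → (ZMod n → Fin k → ℂ) → ZMod n → Fin k → ℂ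
  | 0, v => v
  | m + 1, v => halfTwist k n m (artinComp k n (m + 1) v)

/-- The k-periodic map `W` with window notation
`[v_k, (v_{k−1} v_k) ∩ (v_{k+1} ⋯ v_{2k−1}), …, (v_2 ⋯ v_k) ∩ (v_{k+1} v_{k+2}), v_{k+1}]`. -/
def Wmap (k n : ℕ) (v : ZMod n → Fin k → ℂ) : ZMod n → Fin k → ℂ :=
  fun j =>
    if (ZMod.val j) % k = 1 % k then v (j + ((k - 1 : ℕ) : ZMod n))
    else if (ZMod.val j) % k = 0 then v (j + 1)
    else
      let l : ℕ := (ZMod.val j) % k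
      gcMeet
        (fun m : Fin l =>
          v (j + (k : ZMod n) - ((2 * l : ℕ) : ZMod n) + 1 + ((m : ℕ) : ZMod n)))
        (fun m : Fin (k + 1 - l) =>
          v (j + ((k - l : ℕ) : ZMod n) + 1 + ((m : ℕ) : ZMod n)))

namespace HT
variable {R : Type*} [CommRing R] {k : ℕ}

def DD (c : Fin k → Fin k → R) : R := Matrix.det (Matrix.of c)

def DDf (c : Fin k → Fin k → R) (b : Fin k) : (Fin k → R) →ₗ[R] R :=
  (Matrix.detRowAlternating (n := Fin k) (R := R)).toMultilinearMap.toLinearMap c b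

lemma DDf_apply (c : Fin k → Fin k → R) (b : Fin k) (z : Fin k → R) :
    DDf c b z = DD (Function.update c b z) := rfl

lemma DDf_self (c : Fin k → Fin k → R) (b : Fin k) : DDf c b (c b) = DD c := by
  rw [DDf_apply, Function.update_eq_self]

lemma DDf_ne (c : Fin k → Fin k → R) {b b' : Fin k} (h : b' ≠ b) : DDf c b (c b') = 0 := by
  rw [DDf_apply]
  exact (Matrix.detRowAlternating (n := Fin k) (R := R)).map_update_self c h.symm

lemma DD_inj (c : Fin k → Fin k → R) (s : Fin k → Fin k) (hs : Function.Injective s) :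
    DD (fun b => c (s b)) = DD c ∨ DD (fun b => c (s b)) = - DD c := by
  let e : Equiv.Perm (Fin k) := Equiv.ofBijective s (Finite.injective_iff_bijective.mp hs)
  have h := Matrix.det_permute e (Matrix.of c)
  have h2 : DD (fun b => c (s b)) = ((Equiv.Perm.sign e : ℤ) : R) * DD c := h
  rcases Int.units_eq_one_or (Equiv.Perm.sign e) with h3 | h3
  · left; rw [h2, h3]; simp
  · right; rw [h2, h3]; simp

/-- vectors in complementary coordinate spans of a unimodular family vanish -/
lemma inter_zero (c : Fin k → Fin k → R) (hc : IsUnit (DD c)) (z : Fin k → R)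
    (h : ∀ b, DDf c b z = 0) : z = 0 := by
  have h1 := Matrix.mulVec_cramer (Matrix.transpose (Matrix.of c)) z
  have h2 : Matrix.cramer (Matrix.transpose (Matrix.of c)) z = 0 := by
    ext b
    rw [Matrix.cramer_transpose_apply]
    exact h b
  rw [h2, Matrix.mulVec_zero, Matrix.det_transpose] at h1
  exact (hc.smul_eq_zero).mp h1.symm

def win (V : ℤ → Fin k → R) (t : ℤ) : Fin k → Fin k → R := fun b => V (t + ((b : ℕ) : ℤ))

def coef (V : ℤ → Fin k → R) (s : ℤ) (i : ℕ) : R :=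
  (-1) ^ i * DD (fun c : Fin k =>
    if (c : ℕ) < i then V (s + ((c : ℕ) : ℤ)) else V (s + ((c : ℕ) : ℤ) + 1))

def P (V : ℤ → Fin k → R) (s : ℤ) (p : ℕ) : Fin k → R :=
  ∑ i ∈ Finset.range p, coef V s i • V (s + (i : ℤ))

lemma P_succ (V : ℤ → Fin k → R) (s : ℤ) (p : ℕ) :
    P V s (p + 1) = P V s p + coef V s p • V (s + (p : ℤ)) := Finset.sum_range_succ _ _

lemma coef_zero (V : ℤ → Fin k → R) (s : ℤ) : coef V s 0 = DD (win V (s + 1)) := by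
  simp only [coef, pow_zero, one_mul, Nat.not_lt_zero, if_false]
  congr 1; ext b t; congr 1; ring_nf

lemma coef_top (V : ℤ → Fin k → R) (s : ℤ) : coef V s k = (-1) ^ k * DD (win V s) := by
  simp [coef]
  rfl

lemma P_top (V : ℤ → Fin k → R) (s : ℤ) : P V s (k + 1) = 0 := by
  ext t
  let A : Matrix (Fin (k+1)) (Fin (k+1)) R :=
    Matrix.of fun i => Fin.cons (V (s + ((i : ℕ) : ℤ)) t) (V (s + ((i : ℕ) : ℤ)))
  have h0 : A.det = 0 := by
    apply Matrix.det_zero_of_column_eq (i := 0) (j := t.succ) (Fin.succ_ne_zero t).symm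
    intro i; simp [A]
  rw [Matrix.det_succ_column_zero] at h0
  rw [P, Finset.sum_range, Finset.sum_apply]
  rw [Pi.zero_apply, ← h0]
  refine Finset.sum_congr rfl fun i _ => ?_
  have : DD (fun c : Fin k =>
    if (c : ℕ) < (i : ℕ) then V (s + ((c : ℕ) : ℤ)) else V (s + ((c : ℕ) : ℤ) + 1))
      = (A.submatrix i.succAbove Fin.succ).det := by
    unfold DD
    congr 1
    ext c d
    simp only [A, Matrix.of_apply, Matrix.submatrix_apply, Fin.cons_succ]
    by_cases h : (c : ℕ) < (i : ℕ)
    · rw [if_pos h, Fin.succAbove_of_castSucc_lt _ _ (by simpa [Fin.lt_def] using h)]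
      simp
    · rw [if_neg h, Fin.succAbove_of_le_castSucc _ _ (by simpa [Fin.le_def] using h)]
      simp [add_assoc]
  simp only [Pi.smul_apply, smul_eq_mul, coef, this]
  simp only [A, Matrix.of_apply, Fin.cons_zero]
  ring

lemma P_low (V : ℤ → Fin k → R) (s : ℤ) (p : ℕ) (N : Submodule R (Fin k → R))
    (h : ∀ i, i < p → V (s + (i : ℤ)) ∈ N) : P V s p ∈ N :=
  N.sum_mem fun i hi => N.smul_mem _ (h i (Finset.mem_range.mp hi))

lemma P_high (V : ℤ → Fin k → R) (s : ℤ) (p : ℕ) (hp : p ≤ k + 1) (N : Submodule R (Fin k → R))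
    (h : ∀ i, p ≤ i → i ≤ k → V (s + (i : ℤ)) ∈ N) : P V s p ∈ N := by
  have h1 : P V s p + ∑ i ∈ Finset.Ico p (k+1), coef V s i • V (s + (i : ℤ)) = 0 := by
    rw [← P_top V s]; exact Finset.sum_range_add_sum_Ico _ hp
  rw [eq_neg_of_add_eq_zero_left h1]
  refine N.neg_mem (N.sum_mem fun i hi => N.smul_mem _ ?_)
  rw [Finset.mem_Ico] at hi
  exact h i hi.1 (by omega)

/-- first term plus rest -/
lemma P_head (V : ℤ → Fin k → R) (s : ℤ) (p : ℕ) (hp : 1 ≤ p) (N : Submodule R (Fin k → R))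
    (h : ∀ i, 1 ≤ i → i < p → V (s + (i : ℤ)) ∈ N) :
    P V s p - DD (win V (s+1)) • V s ∈ N := by
  obtain ⟨p, rfl⟩ : ∃ q, p = q + 1 := ⟨p - 1, by omega⟩
  rw [P, Finset.sum_range_succ', coef_zero]
  simp only [Nat.cast_zero, add_zero, add_sub_cancel_right]
  exact N.sum_mem fun i hi => N.smul_mem _ (h _ (by omega) (by
    have := Finset.mem_range.mp hi; omega))

/-- signed Laurent class -/
def Sim (G : Subgroup Rˣ) (x y : Fin k → R) : Prop := ∃ u ∈ G, x = (u : R) • y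

lemma Sim.trans {G : Subgroup Rˣ} {x y z : Fin k → R} (h : Sim G x y) (h' : Sim G y z) :
    Sim G x z := by
  obtain ⟨u, hu, rfl⟩ := h
  obtain ⟨w, hw, rfl⟩ := h'
  exact ⟨u * w, G.mul_mem hu hw, by rw [Units.val_mul, mul_smul]⟩

lemma Sim.symm {G : Subgroup Rˣ} {x y : Fin k → R} (h : Sim G x y) : Sim G y x := by
  obtain ⟨u, hu, rfl⟩ := h
  exact ⟨u⁻¹, G.inv_mem hu, by rw [smul_smul, Units.inv_mul, one_smul]⟩

lemma Sim.mem {G : Subgroup Rˣ} {x y : Fin k → R} (h : Sim G x y) {N : Submodule R (Fin k → R)}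
    (hy : y ∈ N) : x ∈ N := by
  obtain ⟨u, hu, rfl⟩ := h
  exact N.smul_mem _ hy

def InG (G : Subgroup Rˣ) (a : R) : Prop := ∃ u ∈ G, (u : R) = a

lemma InG.mul {G : Subgroup Rˣ} {a b : R} (h : InG G a) (h' : InG G b) : InG G (a * b) := by
  obtain ⟨u, hu, rfl⟩ := h
  obtain ⟨w, hw, rfl⟩ := h'
  exact ⟨u * w, G.mul_mem hu hw, rfl⟩

lemma InG.neg {G : Subgroup Rˣ} (hG : -1 ∈ G) {a : R} (h : InG G a) : InG G (-a) := by
  obtain ⟨u, hu, rfl⟩ := h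
  exact ⟨-1 * u, G.mul_mem hG hu, by simp⟩

lemma InG.sgn {G : Subgroup Rˣ} (hG : -1 ∈ G) (i : ℕ) {a : R} (h : InG G a) :
    InG G ((-1) ^ i * a) := by
  rcases neg_one_pow_eq_or R i with h1 | h1
  · rw [h1, one_mul]; exact h
  · rw [h1, neg_one_mul]; exact h.neg hG

lemma InG.sim {G : Subgroup Rˣ} {a : R} (h : InG G a) (x : Fin k → R) : Sim G (a • x) x := by
  obtain ⟨u, hu, rfl⟩ := h
  exact ⟨u, hu, rfl⟩

def Gen (G : Subgroup Rˣ) (V : ℤ → Fin k → R) : Prop := ∀ t, InG G (DD (win V t))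

def A (i : ℕ) (V : ℤ → Fin k → R) : ℤ → Fin k → R := fun j =>
  if j % (k : ℤ) = (i : ℤ) % (k : ℤ) then V (j + 1)
  else if j % (k : ℤ) = ((i : ℤ) + 1) % (k : ℤ) then
    DD (fun b : Fin k => if (b : ℕ) = 0 then V (j - 1) else V (j + ((b : ℕ) : ℤ))) • V j
      - DD (win V j) • V (j - 1)
  else V j

lemma mod_iff (q l i : ℤ) (K : ℤ) (hl : 1 ≤ l) (hl' : l ≤ K) (hi : 1 ≤ i) (hi' : i ≤ K) :
    (K * q + l) % K = i % K ↔ l = i := by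
  rw [Int.mul_add_emod_self_left]
  constructor
  · intro h
    rcases eq_or_lt_of_le hl' with h1 | h1 <;> rcases eq_or_lt_of_le hi' with h2 | h2
    · omega
    · rw [h1, Int.emod_self, Int.emod_eq_of_lt (by omega) h2] at h; omega
    · rw [h2, Int.emod_self, Int.emod_eq_of_lt (by omega) h1] at h; omega
    · rwa [Int.emod_eq_of_lt (by omega) h1, Int.emod_eq_of_lt (by omega) h2] at h
  · rintro rfl; rfl

lemma A_i (i : ℕ) (hi : 1 ≤ i) (hi' : i + 1 ≤ k) (V : ℤ → Fin k → R) (q : ℤ) :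
    A i V ((k : ℤ) * q + i) = V ((k : ℤ) * q + i + 1) := by
  rw [A, if_pos]
  rw [mod_iff] <;> omega

lemma A_ne (i : ℕ) (hi : 1 ≤ i) (hi' : i + 1 ≤ k) (V : ℤ → Fin k → R) (q l : ℤ)
    (hl : 1 ≤ l) (hl' : l ≤ k) (h1 : l ≠ i) (h2 : l ≠ i + 1) :
    A i V ((k : ℤ) * q + l) = V ((k : ℤ) * q + l) := by
  rw [A, if_neg, if_neg]
  · rw [mod_iff] <;> omega
  · rw [mod_iff] <;> omega

lemma A_i1 (i : ℕ) (hi : 1 ≤ i) (hi' : i + 1 ≤ k) (V : ℤ → Fin k → R) (q : ℤ) :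
    A i V ((k : ℤ) * q + i + 1) =
      DDf (win V ((k : ℤ) * q + i + 1)) ⟨0, by omega⟩ (V ((k : ℤ) * q + i)) •
        V ((k : ℤ) * q + i + 1) - DD (win V ((k : ℤ) * q + i + 1)) • V ((k : ℤ) * q + i) := by
  rw [A, if_neg, if_pos]
  · rw [DDf_apply]
    congr 2
    · congr 1
      ext b t
      by_cases hb : (b : ℕ) = 0
      · obtain ⟨b, hbk⟩ := b
        simp only at hb
        subst hb
        simp
      · rw [if_neg hb, Function.update_of_ne (by intro h; exact hb (by rw [h]))]
        rfl
    · congr 1; ring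
  · rw [add_assoc, mod_iff] <;> omega
  · rw [add_assoc, mod_iff] <;> omega

lemma A_i1' (i : ℕ) (hi : 1 ≤ i) (hi' : i + 1 ≤ k) (V : ℤ → Fin k → R) (q : ℤ) :
    A i V ((k : ℤ) * q + i + 1) = - P V ((k : ℤ) * q + i) 2 := by
  rw [A_i1 i hi hi', P, Finset.sum_range_succ, Finset.sum_range_one, coef_zero, DDf_apply]
  have : coef V ((k : ℤ) * q + i) 1 = - DD (Function.update (win V ((k : ℤ) * q + i + 1))
      ⟨0, by omega⟩ (V ((k : ℤ) * q + i))) := by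
    rw [coef, pow_one, neg_one_mul]
    congr 2
    ext b t
    by_cases hb : (b : ℕ) = 0
    · obtain ⟨b, hbk⟩ := b
      simp only at hb
      subst hb
      simp
    · rw [if_neg (by omega), Function.update_of_ne (by intro h; exact hb (by rw [h]))]
      simp only [win]
      congr 1; ring
  rw [this]
  simp only [Nat.cast_zero, Nat.cast_one, add_zero, neg_smul]
  abel

lemma exists_ql (hk : 1 ≤ k) (t : ℤ) : ∃ q l : ℤ, 1 ≤ l ∧ l ≤ k ∧ t = k * q + l := by
  refine ⟨(t - 1) / k, (t - 1) % k + 1, ?_, ?_, ?_⟩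
  · have := Int.emod_nonneg (t - 1) (b := k) (by omega); omega
  · have := Int.emod_lt_of_pos (t - 1) (b := k) (by omega); omega
  · have := Int.mul_ediv_add_emod (t - 1) k; omega

lemma A_gen (G : Subgroup Rˣ) (hG : -1 ∈ G) (i : ℕ) (hi : 1 ≤ i) (hi' : i + 1 ≤ k)
    (V : ℤ → Fin k → R) (hV : Gen G V) : Gen G (A i V) := by
  intro t
  -- write t = k q + i + 1 + a, 0 ≤ a < k
  obtain ⟨q, l, hl, hl', ht⟩ := exists_ql (k := k) (by omega) (t - i)
  obtain ⟨a, rfl⟩ : ∃ a : ℕ, l = a + 1 := ⟨(l - 1).toNat, by omega⟩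
  have ht' : t = k * q + i + 1 + a := by omega
  rcases Nat.eq_zero_or_pos a with rfl | ha
  · -- cut case
    simp only [Nat.cast_zero, add_zero] at ht'
    subst ht'
    set s : ℤ := k * q + i with hs
    set c := win (A i V) (s + 1) with hc
    have hc0 : c ⟨0, by omega⟩ = - P V s 2 := by
      rw [← A_i1' i hi hi' V q]; simp [c, win, hs]
    have hctop : c ⟨k - 1, by omega⟩ = V (s + 1 + k) := by
      have := A_i i hi hi' V (q + 1)
      simp only [c, win]
      rw [show s + 1 + (((k - 1 : ℕ)) : ℤ) = k * (q + 1) + i by push_cast [show 1 ≤ k by omega]; rw [hs]; ring]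
      rw [this]; congr 1; rw [hs]; ring
    have hcmid : ∀ b : Fin k, 0 < (b : ℕ) → (b : ℕ) < k - 1 → c b = V (s + 1 + ((b : ℕ) : ℤ)) := by
      intro b hb hb'
      simp only [c, win]
      by_cases h : i + 1 + (b : ℕ) ≤ k
      · have := A_ne i hi hi' V q (i + 1 + (b : ℕ)) (by omega) (by omega) (by omega) (by omega)
        rw [show s + 1 + ((b : ℕ) : ℤ) = k * q + (i + 1 + (b : ℕ)) by rw [hs]; ring, this]
      · have := A_ne i hi hi' V (q + 1) (i + 1 + (b : ℕ) - k) (by omega) (by omega) (by omega) (by omega)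
        rw [show s + 1 + ((b : ℕ) : ℤ) = k * (q + 1) + (i + 1 + (b : ℕ) - k) by rw [hs]; ring, this]
    have key : DD c = DDf c ⟨0, by omega⟩ (coef V s k • V (s + k)) := by
      have h1 : - P V s 2 - coef V s k • V (s + k) ∈ LinearMap.ker (DDf c ⟨0, by omega⟩) := by
        have h2 : P V s (k + 1) = P V s 2 + ∑ i ∈ Finset.Ico 2 k, coef V s i • V (s + (i : ℤ))
            + coef V s k • V (s + k) := by
          rw [P_succ, P, P, Finset.sum_range_add_sum_Ico _ (by omega)]
        rw [P_top] at h2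
        have h3 : - P V s 2 - coef V s k • V (s + k)
            = ∑ i ∈ Finset.Ico 2 k, coef V s i • V (s + (i : ℤ)) := by
          rw [add_assoc, add_comm, ← sub_eq_iff_eq_add, zero_sub] at h2
          rw [h2]; abel
        rw [h3]
        refine Submodule.sum_mem _ fun x hx => Submodule.smul_mem _ _ ?_
        rw [Finset.mem_Ico] at hx
        have := hcmid ⟨x - 1, by omega⟩ (by simp; omega) (by simp; omega)
        rw [show s + 1 + (((⟨x - 1, by omega⟩ : Fin k) : ℕ) : ℤ) = s + x by
          push_cast [show 1 ≤ x by omega]; ring] at this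
        rw [← this, LinearMap.mem_ker]
        exact DDf_ne _ (by simp [Fin.ext_iff]; omega)
      rw [LinearMap.mem_ker, map_sub, sub_eq_zero] at h1
      rw [← h1, ← hc0, DDf_self]
    rw [key, map_smul, smul_eq_mul, coef_top]
    refine ((hV s).sgn hG k).mul ?_
    rw [DDf_apply]
    have h5 : Function.update c ⟨0, by omega⟩ (V (s + k)) = fun b : Fin k =>
        win V (s + 2) ((fun b : Fin k => if (b : ℕ) = k - 1 then b else
          if (b : ℕ) = 0 then ⟨k - 2, by omega⟩ else ⟨(b : ℕ) - 1, by omega⟩) b) := by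
      funext b
      by_cases hb : (b : ℕ) = 0
      · obtain ⟨b, hbk⟩ := b
        simp only at hb
        subst hb
        simp only [Function.update_self, win]
        rw [if_neg (by omega), if_pos trivial]
        congr 1; push_cast [show 2 ≤ k by omega]; ring
      · rw [Function.update_of_ne (by intro h; exact hb (by rw [h]))]
        by_cases hb' : (b : ℕ) = k - 1
        · have : b = ⟨k - 1, by omega⟩ := Fin.ext hb'
          rw [this, hctop]
          simp only [win, if_true]
          congr 1; push_cast [show 1 ≤ k by omega]; ring
        · rw [hcmid b (by omega) (by omega)]
          simp only [win, if_neg hb, if_neg hb']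
          congr 1; push_cast [show 1 ≤ (b : ℕ) by omega]; ring
    rw [h5]
    rcases DD_inj (win V (s + 2)) (fun b : Fin k => if (b : ℕ) = k - 1 then b else
          if (b : ℕ) = 0 then ⟨k - 2, by omega⟩ else ⟨(b : ℕ) - 1, by omega⟩) (by
        intro x y hxy
        have h6 := congrArg Fin.val hxy
        simp only [apply_ite Fin.val] at h6
        apply Fin.ext
        split_ifs at h6 <;> omega) with h | h
    · rw [h]; exact hV _
    · rw [h]; exact (hV _).neg hG
  · -- non-cut case : position of the pair
    set s : ℤ := k * (q + 1) + i with hs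
    have hp : t + ((k - 1 - a : ℕ) : ℤ) = s := by
      rw [ht', hs]; push_cast [show 1 ≤ k by omega, show a ≤ k - 1 by omega]; ring
    let p : Fin k := ⟨k - 1 - a, by omega⟩
    let p' : Fin k := ⟨k - a, by omega⟩
    have hpp : p ≠ p' := by simp [p, p', Fin.ext_iff]; omega
    set c := win V t with hc
    have hcp : c p = V s := by simp only [c, win, p]; rw [hp]
    have hcp' : c p' = V (s + 1) := by
      simp only [c, win, p']; congr 1; omega
    have h1 : win (A i V) t = Function.update (Function.update c p (c p')) p'
        (DDf (win V (s + 1)) ⟨0, by omega⟩ (V s) • c p' - DD (win V (s + 1)) • c p) := by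
      funext b
      by_cases hb : b = p'
      · subst hb
        rw [Function.update_self, hcp, hcp', ← A_i1 i hi hi' V (q + 1)]
        simp only [win, p']; congr 1; omega
      · rw [Function.update_of_ne hb]
        by_cases hb' : b = p
        · subst hb'
          rw [Function.update_self, hcp', ← A_i i hi hi' V (q + 1)]
          simp only [win, p]; congr 1
        · rw [Function.update_of_ne hb']
          simp only [c, win]
          have h3 : (b : ℕ) ≠ k - a := fun h => hb (Fin.ext h)
          have h4 : (b : ℕ) ≠ k - 1 - a := fun h => hb' (Fin.ext h)
          have h7 := b.isLt
          by_cases h : i + 1 + a + (b : ℕ) ≤ k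
          · have := A_ne i hi hi' V q (i + 1 + a + (b : ℕ)) (by omega) (by omega) (by omega) (by omega)
            rw [show t + ((b : ℕ) : ℤ) = k * q + (i + 1 + a + (b : ℕ)) by rw [ht']; ring, this]
          · by_cases h' : i + 1 + a + (b : ℕ) ≤ 2 * k
            · have := A_ne i hi hi' V (q + 1) (i + 1 + a + (b : ℕ) - k) (by omega) (by omega) (by omega) (by omega)
              rw [show t + ((b : ℕ) : ℤ) = k * (q + 1) + (i + 1 + a + (b : ℕ) - k) by rw [ht']; ring, this]
            · have := A_ne i hi hi' V (q + 2) (i + 1 + a + (b : ℕ) - 2 * k) (by omega) (by omega) (by omega) (by omega)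
              rw [show t + ((b : ℕ) : ℤ) = k * (q + 2) + (i + 1 + a + (b : ℕ) - 2 * k) by rw [ht']; ring, this]
    rw [h1, ← DDf_apply, map_sub, map_smul, map_smul]
    have h2 : DDf (Function.update c p (c p')) p' (c p') = 0 := by
      have := DDf_ne (Function.update c p (c p')) hpp
      rwa [Function.update_self] at this
    have h3 : DDf (Function.update c p (c p')) p' (c p) = - DD c := by
      rw [DDf_apply]
      have := (Matrix.detRowAlternating (n := Fin k) (R := R)).map_swap c hpp
      have h4 : (c ∘ Equiv.swap p p') =
          Function.update (Function.update c p (c p')) p' (c p) := by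
        funext b
        by_cases hb : b = p'
        · subst hb; simp
        · by_cases hb' : b = p
          · subst hb'; simp [Function.update_of_ne hb]
          · simp [Function.update_of_ne hb, Function.update_of_ne hb',
              Equiv.swap_apply_of_ne_of_ne hb' hb]
      rw [← h4]; exact this
    rw [h2, h3, smul_zero, zero_sub, smul_eq_mul]
    exact ((hV _).mul ((hV _).neg hG)).neg hG


def C : ℕ → (ℤ → Fin k → R) → ℤ → Fin k → R
  | 0, V => V
  | m + 1, V => A (m + 1) (C m V)

lemma C_gen (G : Subgroup Rˣ) (hG : -1 ∈ G) (m : ℕ) (hm : m + 1 ≤ k)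
    (V : ℤ → Fin k → R) (hV : Gen G V) : Gen G (C m V) := by
  induction m with
  | zero => exact hV
  | succ m ih => exact A_gen G hG (m + 1) (by omega) (by omega) _ (ih (by omega))

lemma C_formula (G : Subgroup Rˣ) (hG : -1 ∈ G) (m : ℕ) (hm : m + 1 ≤ k)
    (U : ℤ → Fin k → R) (hU : Gen G U) (q : ℤ) :
    (∀ l : ℤ, 1 ≤ l → l ≤ m → C m U (k * q + l) = U (k * q + l + 1)) ∧
    (∀ l : ℤ, m + 2 ≤ l → l ≤ k → C m U (k * q + l) = U (k * q + l)) ∧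
    Sim G (C m U (k * q + m + 1)) (P U (k * q + 1) (m + 1)) := by
  induction m generalizing q with
  | zero =>
    refine ⟨fun l h1 h2 => by simp at h2; omega, fun l _ _ => rfl, ?_⟩
    apply Sim.symm
    rw [P, zero_add, Finset.sum_range_one, coef_zero]
    simp only [Nat.cast_zero, add_zero]
    exact (hU _).sim _
  | succ m ih =>
    have ih := fun q => ih (by omega) q
    obtain ⟨i1, i2, i3⟩ := ih q
    obtain ⟨j1, j2, j3⟩ := ih (q + 1)
    have hgen : Gen G (C m U) := C_gen G hG m (by omega) U hU
    set U' := C m U with hU'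
    have hC : C (m + 1) U = A (m + 1) U' := rfl
    rw [hC]
    refine ⟨fun l h1 h2 => ?_, fun l h1 h2 => ?_, ?_⟩
    · by_cases h : l = m + 1
      · subst h
        have := A_i (m + 1) (by omega) (by omega) U' q
        push_cast at this
        rw [this, add_assoc, i2 _ (by omega) (by omega)]
      · rw [A_ne (m + 1) (by omega) (by omega) U' q l (by omega) (by omega) (by omega) (by omega)]
        exact i1 l h1 (by push_cast at h2; omega)
    · push_cast at h1
      rw [A_ne (m + 1) (by omega) (by omega) U' q l (by omega) (by omega) (by omega) (by omega)]
      exact i2 l (by omega) h2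
    · have hA := A_i1 (m + 1) (by omega) (by omega) U' q
      rw [hA]
      set j : ℤ := k * q + ((m + 1 : ℕ) : ℤ) + 1 with hj
      set c := win U' j with hc
      set f := DDf c ⟨0, by omega⟩ with hf
      have hker : ∀ b : ℕ, 0 < b → b < k → f (U' (j + b)) = 0 := by
        intro b hb hb'
        exact DDf_ne c (b' := ⟨b, hb'⟩) (by simp [Fin.ext_iff]; omega)
      have e0 : U' j = U j := by
        have := i2 (m + 2) (by omega) (by omega)
        rw [hj]; push_cast
        rw [show (k : ℤ) * q + (m + 1) + 1 = k * q + (m + 2) by ring]; exact this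
      have e1 : ∀ b : ℕ, 0 < b → m + 2 + b ≤ k → f (U (j + b)) = 0 := by
        intro b hb hb'
        rw [← hker b hb (by omega)]
        have := i2 (m + 2 + b) (by omega) (by omega)
        rw [show j + b = k * q + (m + 2 + b) by rw [hj]; push_cast; ring, this]
      have e2 : ∀ l : ℕ, 1 ≤ l → l ≤ m → f (U (k * (q + 1) + 1 + l)) = 0 := by
        intro l hl hl'
        have := j1 l (by omega) (by omega)
        rw [show (k : ℤ) * (q + 1) + 1 + l = k * (q + 1) + l + 1 by ring, ← this]
        rw [show (k : ℤ) * (q + 1) + l = j + ((k + l - (m + 2) : ℕ) : ℤ) by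
          rw [Nat.cast_sub (by omega), hj]; push_cast; ring]
        exact hker _ (by omega) (by omega)
      have e3 : f (P U (k * (q + 1) + 1) (m + 1)) = 0 := by
        have h1 : U' (k * (q + 1) + m + 1) ∈ LinearMap.ker f := by
          rw [show (k : ℤ) * (q + 1) + m + 1 = j + ((k - 1 : ℕ) : ℤ) by
            rw [Nat.cast_sub (by omega), hj]; push_cast; ring]
          exact hker _ (by omega) (by omega)
        exact j3.symm.mem h1
      have e4 : f (U (k * (q + 1) + 1)) = 0 := by
        have h1 := P_head U (k * (q + 1) + 1) (m + 1) (by omega) (LinearMap.ker f)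
          (fun i hi hi' => e2 i hi (by omega))
        rw [LinearMap.mem_ker, map_sub, e3, zero_sub, map_smul, neg_eq_zero] at h1
        obtain ⟨u, hu, hu'⟩ := hU (k * (q + 1) + 1 + 1)
        rw [← hu'] at h1
        exact (u.isUnit.smul_eq_zero).mp h1
      have e5 : f (P U (k * q + 1) (m + 2)) = 0 := by
        have : P U (k * q + 1) (m + 2) ∈ LinearMap.ker f := by
          refine P_high U _ _ (by omega) _ fun i hi hi' => ?_
          rw [LinearMap.mem_ker]
          by_cases h : i = k
          · rw [← e4, h]; congr 2; ring
          · rw [← e1 (i - (m + 1)) (by omega) (by omega)]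
            congr 2
            rw [Nat.cast_sub (by omega), hj]; push_cast; ring
        exact this
      have hx : (k : ℤ) * q + 1 + ((m + 1 : ℕ) : ℤ) = j := by rw [hj]; ring
      have e6 : P U (k * q + 1) (m + 2) =
          P U (k * q + 1) (m + 1) + coef U (k * q + 1) (m + 1) • U j := by
        rw [P_succ, hx]
      obtain ⟨g, hg, hg'⟩ := i3
      have e7 : U' (k * q + ((m + 1 : ℕ) : ℤ)) = (g : R) • P U (k * q + 1) (m + 1) := by
        rw [← hg']; congr 1; push_cast; ring
      have e8 : f (U j) = DD c := by
        rw [← e0, hf, ← DDf_self c ⟨0, by omega⟩]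
        congr 1
        simp [c, win]
      rw [e6, map_add, map_smul, e8] at e5
      rw [e7, map_smul, eq_neg_of_add_eq_zero_left e5, e0]
      have e9 : ((g : R) • -(coef U (k * q + 1) (m + 1) • DD c)) • U j
          - DD c • (g : R) • P U (k * q + 1) (m + 1)
          = (-((g : R) * DD c)) • P U (k * q + 1) (m + 1 + 1) := by
        rw [e6]
        simp only [smul_eq_mul]
        module
      rw [e9]
      have h10 : InG G (-((g : R) * DD c)) := InG.neg hG (InG.mul ⟨g, hg, rfl⟩ (hgen _))
      exact h10.sim _

def HTz : ℕ → (ℤ → Fin k → R) → ℤ → Fin k → R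
  | 0, V => V
  | m + 1, V => HTz m (C (m + 1) V)

/-- state after `s` stages -/
structure Inv (G : Subgroup Rˣ) (V U : ℤ → Fin k → R) (s : ℕ) : Prop where
  gen : Gen G U
  low : ∀ q l : ℤ, 1 ≤ l → l + s ≤ k → U (k * q + l) = V (k * q + l + s)
  high : ∀ (q : ℤ) (t : ℕ), 1 ≤ t → t ≤ s →
    Sim G (U (k * q + (k + 1 - t))) (P V (k * q + t) (k + 1 - t))

lemma stage (G : Subgroup Rˣ) (hG : -1 ∈ G) (V U : ℤ → Fin k → R) (hV : Gen G V) (m s : ℕ)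
    (hms : m + s + 1 = k) (hm : 1 ≤ m) (h : Inv G V U s) : Inv G V (C m U) (s + 1) := by
  refine ⟨C_gen G hG m (by omega) U h.gen, fun q l h1 h2 => ?_, fun q t h1 h2 => ?_⟩
  · rw [(C_formula G hG m (by omega) U h.gen q).1 l h1 (by push_cast at h2; omega)]
    rw [add_assoc, h.low q (l + 1) (by omega) (by push_cast at h2; omega)]
    congr 1; push_cast; ring
  · by_cases ht : t = s + 1
    · subst ht
      have h3 := (C_formula G hG m (by omega) U h.gen q).2.2
      rw [show (k : ℤ) * q + (k + 1 - ((s + 1 : ℕ) : ℤ)) = k * q + m + 1 by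
        rw [← hms]; push_cast; ring]
      refine h3.trans ?_
      rw [show k + 1 - (s + 1) = m + 1 by omega]
      set x := P U (k * q + 1) (m + 1) with hx
      set y := P V (k * q + ((s + 1 : ℕ) : ℤ)) (m + 1) with hy
      set c := win V (k * q + s + 2) with hc
      have lowV : ∀ i : ℕ, i ≤ m → U (k * q + 1 + i) = V (k * q + ((s + 1 : ℕ) : ℤ) + i) := by
        intro i hi
        rw [add_assoc, h.low q (1 + i) (by omega) (by omega)]
        congr 1; push_cast; ring
      have e : DD (win U (k * q + 1 + 1)) • y = DD c • x := by
        rw [← sub_eq_zero]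
        refine inter_zero c ?_ _ fun b => ?_
        · obtain ⟨u, hu, hu'⟩ := hV (k * q + s + 2)
          rw [← hu']; exact u.isUnit
        · have hb := b.isLt
          have hker : ∀ a : ℕ, a < k → a ≠ b → V (k * q + s + 2 + a) ∈ LinearMap.ker (DDf c b) := by
            intro a ha hab
            exact DDf_ne c (b' := ⟨a, ha⟩) (by simpa [Fin.ext_iff] using hab)
          by_cases hbm : (b : ℕ) < m
          · -- in the span of the last ones
            have hv : ∀ d : ℕ, 1 ≤ d → d ≤ s + 1 → V (k * q + k + d) ∈ LinearMap.ker (DDf c b) := by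
              intro d hd hd'
              have := hker (m + d - 1) (by omega) (by omega)
              rwa [show (k : ℤ) * q + s + 2 + ((m + d - 1 : ℕ) : ℤ) = k * q + k + d by
                rw [Nat.cast_sub (by omega), ← hms]; push_cast; ring] at this
            have hy' : y ∈ LinearMap.ker (DDf c b) := by
              refine P_high V _ _ (by omega) _ fun i hi hi' => ?_
              have := hv (i - m) (by omega) (by omega)
              rwa [show (k : ℤ) * q + k + ((i - m : ℕ) : ℤ) = k * q + ((s + 1 : ℕ) : ℤ) + i by
                rw [Nat.cast_sub (by omega), ← hms]; push_cast; ring] at this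
            have hx' : x ∈ LinearMap.ker (DDf c b) := by
              refine P_high U _ _ (by omega) _ fun i hi hi' => ?_
              by_cases hik : i = k
              · have := hv (s + 1) (by omega) (by omega)
                have h5 := h.low (q + 1) 1 (by omega) (by omega)
                rw [hik, show (k : ℤ) * q + 1 + k = k * (q + 1) + 1 by ring, h5]
                rwa [show (k : ℤ) * q + k + ((s + 1 : ℕ) : ℤ) = k * (q + 1) + 1 + s by
                  push_cast; ring] at this
              · have h5 := h.high q (k - i) (by omega) (by omega)
                rw [show (k : ℤ) * q + 1 + i = k * q + (k + 1 - ((k - i : ℕ) : ℤ)) by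
                  rw [Nat.cast_sub (by omega)]; ring]
                refine h5.mem ?_
                refine P_high V _ _ (by omega) _ fun d hd hd' => ?_
                have := hv (d - i) (by omega) (by omega)
                rwa [show (k : ℤ) * q + k + ((d - i : ℕ) : ℤ) = k * q + ((k - i : ℕ) : ℤ) + d by
                  rw [Nat.cast_sub (by omega), Nat.cast_sub (by omega)]; ring] at this
            exact (LinearMap.ker (DDf c b)).sub_mem (Submodule.smul_mem _ _ hy')
              (Submodule.smul_mem _ _ hx')
          · have hx' := P_head U (k * q + 1) (m + 1) (by omega) (LinearMap.ker (DDf c b))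
              (fun i hi hi' => by
                rw [lowV i (by omega)]
                have := hker (i - 1) (by omega) (by omega)
                rwa [show (k : ℤ) * q + s + 2 + ((i - 1 : ℕ) : ℤ) = k * q + ((s + 1 : ℕ) : ℤ) + i by
                  rw [Nat.cast_sub (by omega)]; push_cast; ring] at this)
            have hy' := P_head V (k * q + ((s + 1 : ℕ) : ℤ)) (m + 1) (by omega)
              (LinearMap.ker (DDf c b)) (fun i hi hi' => by
                have := hker (i - 1) (by omega) (by omega)
                rwa [show (k : ℤ) * q + s + 2 + ((i - 1 : ℕ) : ℤ) = k * q + ((s + 1 : ℕ) : ℤ) + i by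
                  rw [Nat.cast_sub (by omega)]; push_cast; ring] at this)
            have h0 := lowV 0 (by omega)
            simp only [Nat.cast_zero, add_zero] at h0
            rw [h0] at hx'
            rw [show (k : ℤ) * q + ((s + 1 : ℕ) : ℤ) + 1 = k * q + s + 2 by push_cast; ring] at hy'
            have := (LinearMap.ker (DDf c b)).sub_mem
              (Submodule.smul_mem _ (DD (win U (k * q + 1 + 1))) hy')
              (Submodule.smul_mem _ (DD c) hx')
            rw [← LinearMap.mem_ker]
            convert this using 1
            simp only [smul_sub, smul_smul]
            rw [mul_comm (DD c)]
            abel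
      have h5 : Sim G (DD (win U (k * q + 1 + 1)) • y) y := (h.gen _).sim _
      rw [e] at h5
      exact ((hV _).sim x).symm.trans h5
    · have h3 := (C_formula G hG m (by omega) U h.gen q).2.1 (k + 1 - t) (by omega) (by omega)
      rw [h3]
      exact h.high q t h1 (by omega)

lemma HTz_inv (G : Subgroup Rˣ) (hG : -1 ∈ G) (V : ℤ → Fin k → R) (hV : Gen G V) (m : ℕ) :
    ∀ (s : ℕ) (U : ℤ → Fin k → R), m + s + 1 = k → Inv G V U s →
      Inv G V (HTz m U) (k - 1) := by
  induction m with
  | zero => intro s U h hi; rw [show k - 1 = s by omega]; exact hi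
  | succ m ih =>
    intro s U h hi
    exact ih (s + 1) _ (by omega) (stage G hG V U hV (m + 1) s (by omega) (by omega) hi)

lemma HTz_final (G : Subgroup Rˣ) (hG : -1 ∈ G) (V : ℤ → Fin k → R) (hV : Gen G V) (hk : 1 ≤ k) :
    Inv G V (HTz (k - 1) V) (k - 1) :=
  HTz_inv G hG V hV (k - 1) 0 V (by omega)
    ⟨hV, fun q l _ _ => by simp, fun q t h1 h2 => by omega⟩


section transfer
variable {S : Type*} [CommRing S] (φ : R →+* S)

lemma map_DD (c : Fin k → Fin k → R) : φ (DD c) = DD (fun b t => φ (c b t)) := by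
  rw [DD, RingHom.map_det]; rfl

def mapV (V : ℤ → Fin k → R) : ℤ → Fin k → S := fun z t => φ (V z t)

lemma map_A (i : ℕ) (V : ℤ → Fin k → R) : A i (mapV φ V) = mapV φ (A i V) := by
  funext j t
  simp only [A, mapV]
  split_ifs
  · rfl
  · simp only [Pi.sub_apply, Pi.smul_apply, smul_eq_mul, map_sub, map_mul, map_DD]
    congr 3
    congr 1
    funext b t
    split_ifs <;> rfl
  · rfl

lemma map_C (m : ℕ) (V : ℤ → Fin k → R) : C m (mapV φ V) = mapV φ (C m V) := by
  induction m with
  | zero => rfl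
  | succ m ih => rw [C, ih, map_A]; rfl

lemma map_HTz (m : ℕ) (V : ℤ → Fin k → R) : HTz m (mapV φ V) = mapV φ (HTz m V) := by
  induction m generalizing V with
  | zero => rfl
  | succ m ih => rw [HTz, map_C, ih]; rfl

lemma map_P (V : ℤ → Fin k → R) (s : ℤ) (p : ℕ) (t : Fin k) :
    P (mapV φ V) s p t = φ (P V s p t) := by
  simp only [P, Finset.sum_apply, map_sum, Pi.smul_apply, smul_eq_mul, map_mul]
  refine Finset.sum_congr rfl fun i _ => ?_
  congr 1
  simp only [coef, map_mul, map_pow, map_neg, map_one, map_DD]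
  congr 2
  funext b t
  split_ifs <;> rfl

end transfer

lemma colDet_eq (c : Fin k → Fin k → ℂ) : colDet c = DD c := by
  rw [colDet, DD, ← Matrix.det_transpose]; rfl

def lift {n : ℕ} (v : ZMod n → Fin k → ℂ) : ℤ → Fin k → ℂ := fun z => v (z : ZMod n)

lemma val_mod (n r : ℕ) (hn : n = r * k) (hn0 : n ≠ 0) (z : ℤ) :
    (((z : ZMod n).val % k : ℕ) : ℤ) = z % k := by
  haveI : NeZero n := ⟨hn0⟩
  rw [Int.natCast_mod, ZMod.val_intCast]
  exact Int.emod_emod_of_dvd z ⟨r, by rw [hn]; push_cast; ring⟩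

lemma frozen_eq {n : ℕ} (v : ZMod n → Fin k → ℂ) (z : ℤ) :
    frozen k n v (z : ZMod n) = DD (win (lift v) z) := by
  rw [frozen, colDet_eq]
  congr 1
  funext b
  simp [win, lift]

lemma lift_A (n r : ℕ) (hn : n = r * k) (hn0 : n ≠ 0) (i : ℕ) (v : ZMod n → Fin k → ℂ) :
    A i (lift v) = lift (artin k n i v) := by
  funext j
  have h := val_mod n r hn hn0 j
  have h1 : j % (k : ℤ) = (i : ℤ) % (k : ℤ) ↔ (j : ZMod n).val % k = i % k := by
    rw [← h]; norm_cast
  have h2 : j % (k : ℤ) = ((i : ℤ) + 1) % (k : ℤ) ↔ (j : ZMod n).val % k = (i + 1) % k := by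
    rw [← h]; norm_cast
  simp only [A, lift, artin, h1, h2]
  rw [frozen_eq, colDet_eq]
  push_cast
  rfl

lemma lift_C (n r : ℕ) (hn : n = r * k) (hn0 : n ≠ 0) (m : ℕ) (v : ZMod n → Fin k → ℂ) :
    C m (lift v) = lift (artinComp k n m v) := by
  induction m with
  | zero => rfl
  | succ m ih => rw [C, ih, lift_A n r hn hn0]; rfl

lemma lift_HTz (n r : ℕ) (hn : n = r * k) (hn0 : n ≠ 0) (m : ℕ) (v : ZMod n → Fin k → ℂ) :
    HTz m (lift v) = lift (halfTwist k n m v) := by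
  induction m generalizing v with
  | zero => rfl
  | succ m ih => rw [HTz, lift_C n r hn hn0, ih]; rfl

lemma gcMeet_eq (X : ℤ → Fin k → ℂ) (s : ℤ) (p q : ℕ) (hp : 1 ≤ p) (hpq : p + q = k + 1) :
    gcMeet (fun m : Fin p => X (s + ((m : ℕ) : ℤ))) (fun m : Fin q => X (s + p + ((m : ℕ) : ℤ)))
      = ((-1 : ℂ) ^ (p - 1)) • P X s p := by
  rw [gcMeet, P, Finset.sum_range, Finset.smul_sum]
  refine Finset.sum_congr rfl fun i _ => ?_
  rw [smul_smul]
  congr 1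
  rw [coef, ← mul_assoc, colDet_eq]
  congr 1
  · have h1 : p - 1 = (p - 1 - i) + i := by omega
    conv_rhs => rw [h1, pow_add, mul_assoc, ← mul_pow]
    simp
  · congr 1
    funext c
    have hi := i.isLt
    have hc := c.isLt
    by_cases h : (c : ℕ) < p - 1
    · rw [dif_pos h]
      by_cases h' : (c : ℕ) < i
      · rw [dif_pos h', if_pos h']
      · rw [dif_neg h', if_neg h']
        congr 1; push_cast; ring
    · rw [dif_neg h, dif_pos (by omega), if_neg (by omega)]
      congr 1
      simp only
      rw [Nat.cast_sub (by omega), Nat.cast_sub (by omega)]; push_cast; ring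

abbrev RR (k n : ℕ) := {v : ZMod n → Fin k → ℂ // Generic k n v} → ℂ

lemma laurent_add {n : ℕ} (v : ZMod n → Fin k → ℂ) (hv : Generic k n v) (e e' : Fin n → ℤ) :
    laurent k n (e + e') v = laurent k n e v * laurent k n e' v := by
  simp only [laurent, ← Finset.prod_mul_distrib, Pi.add_apply]
  exact Finset.prod_congr rfl fun m _ => zpow_add₀ (hv _) _ _

lemma laurent_neg {n : ℕ} (v : ZMod n → Fin k → ℂ) (e : Fin n → ℤ) :
    laurent k n (-e) v = (laurent k n e v)⁻¹ := by
  simp [laurent, zpow_neg]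

lemma laurent_zero {n : ℕ} (v : ZMod n → Fin k → ℂ) : laurent k n 0 v = 1 := by
  simp [laurent]

def GG (k n : ℕ) : Subgroup (RR k n)ˣ where
  carrier := {u | ∃ (ε : ℂ) (e : Fin n → ℤ), (ε = 1 ∨ ε = -1) ∧
    ∀ v, (u : RR k n) v = ε * laurent k n e v.1}
  one_mem' := ⟨1, 0, Or.inl rfl, fun v => by rw [laurent_zero]; simp⟩
  mul_mem' := by
    rintro a b ⟨ε, e, hε, h⟩ ⟨ε', e', hε', h'⟩
    refine ⟨ε * ε', e + e', ?_, fun v => ?_⟩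
    · rcases hε with rfl | rfl <;> rcases hε' with rfl | rfl <;> simp
    · rw [Units.val_mul, Pi.mul_apply, h, h', laurent_add _ v.2]; ring
  inv_mem' := by
    rintro a ⟨ε, e, hε, h⟩
    refine ⟨ε, -e, hε, fun v => ?_⟩
    have h1 : ((a⁻¹ : (RR k n)ˣ) : RR k n) v * (a : RR k n) v = 1 := by
      rw [← Pi.mul_apply, Units.inv_mul]; rfl
    rw [eq_inv_of_mul_eq_one_left h1, h, laurent_neg, mul_inv]
    rcases hε with rfl | rfl <;> norm_num

lemma neg_one_GG (k n : ℕ) : -1 ∈ GG k n :=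
  ⟨-1, 0, Or.inr rfl, fun v => by rw [laurent_zero]; simp⟩

def VV (k n : ℕ) : ℤ → Fin k → RR k n := fun z t v => v.1 (z : ZMod n) t

lemma mapV_VV {n : ℕ} (v : {v : ZMod n → Fin k → ℂ // Generic k n v}) :
    mapV (Pi.evalRingHom (fun _ => ℂ) v) (VV k n) = lift v.1 := rfl

lemma Gen_VV (n : ℕ) (hn0 : n ≠ 0) : Gen (GG k n) (VV k n) := by
  haveI : NeZero n := ⟨hn0⟩
  intro z
  have h : ∀ v, DD (win (VV k n) z) v = frozen k n v.1 (z : ZMod n) := by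
    intro v
    rw [frozen_eq]
    exact map_DD (Pi.evalRingHom (fun _ => ℂ) v) _
  refine ⟨⟨DD (win (VV k n) z), (DD (win (VV k n) z))⁻¹, ?_, ?_⟩, ?_, rfl⟩
  · funext v
    simp only [Pi.mul_apply, Pi.inv_apply, Pi.one_apply]
    exact mul_inv_cancel₀ (by rw [h]; exact v.2 _)
  · funext v
    simp only [Pi.mul_apply, Pi.inv_apply, Pi.one_apply]
    exact inv_mul_cancel₀ (by rw [h]; exact v.2 _)
  · refine ⟨1, Pi.single ⟨(z : ZMod n).val, ZMod.val_lt _⟩ 1, Or.inl rfl, fun v => ?_⟩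
    rw [one_mul, laurent, Finset.prod_eq_single ⟨(z : ZMod n).val, ZMod.val_lt _⟩]
    · simp [h]
    · intro b _ hb
      rw [Pi.single_eq_of_ne hb, zpow_zero]
    · simp

lemma final (k r n : ℕ) (hk : 2 ≤ k) (hr : 2 ≤ r) (hn : n = r * k) (j : ZMod n) :
    ∃ y : Fin k → RR k n, Sim (GG k n) (HTz (k - 1) (VV k n) (j.val : ℤ)) y ∧
      ∀ v t, y t v = Wmap k n v.1 j t := by
  have hn0 : n ≠ 0 := by rw [hn]; positivity
  haveI : NeZero n := ⟨hn0⟩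
  have hI := HTz_final (GG k n) (neg_one_GG k n) (VV k n) (Gen_VV n hn0) (by omega)
  have hG := Gen_VV (k := k) n hn0
  have hdiv := Nat.div_add_mod j.val k
  set q := j.val / k with hq
  set l := j.val % k with hl
  have hlk : l < k := Nat.mod_lt _ (by omega)
  have hjv : ((j.val : ℤ) : ZMod n) = j := by simp
  have hz : (j.val : ℤ) = k * q + l := by rw [← hdiv]; push_cast; ring
  by_cases h1 : l = 1
  · refine ⟨VV k n (k * q + 1 + ((k - 1 : ℕ) : ℤ)), ?_, fun v t => ?_⟩
    · have := hI.low q 1 (by omega) (by omega)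
      rw [hz, h1, Nat.cast_one, this]
      exact ⟨1, Subgroup.one_mem _, by simp⟩
    · rw [Wmap, if_pos (by rw [← hl, h1, Nat.mod_eq_of_lt (by omega)])]
      simp only [VV]
      congr 2
      rw [Int.cast_add, show (k : ℤ) * q + 1 = (j.val : ℤ) by rw [hz, h1]; simp, hjv]
      simp
  by_cases h0 : l = 0
  · refine ⟨VV k n (k * q + 1), ?_, fun v t => ?_⟩
    · have := hI.high (q - 1) 1 (by omega) (by omega)
      rw [show (k : ℤ) * (q - 1) + (k + 1 - ((1 : ℕ) : ℤ)) = (j.val : ℤ) by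
        rw [hz, h0]; push_cast; ring] at this
      refine this.trans ?_
      have h3 := P_top (VV k n) (k * (q - 1) + ((1 : ℕ) : ℤ))
      rw [P_succ, coef_top] at h3
      rw [show k + 1 - 1 = k by omega, eq_neg_of_add_eq_zero_left h3, ← neg_smul,
        show (k : ℤ) * (q - 1) + ((1 : ℕ) : ℤ) + k = k * q + 1 by push_cast; ring]
      exact (((hG _).sgn (neg_one_GG k n) k).neg (neg_one_GG k n)).sim _
    · rw [Wmap, if_neg (by rw [← hl, h0, Nat.mod_eq_of_lt (by omega)]; omega), if_pos h0]
      simp only [VV]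
      congr 2
      rw [Int.cast_add, show (k : ℤ) * q = (j.val : ℤ) by rw [hz, h0]; simp, hjv]
      simp
  · refine ⟨((-1 : RR k n) ^ (l - 1)) • P (VV k n) (k * q + (k + 1 - l : ℕ)) l, ?_, fun v t => ?_⟩
    · have := hI.high q (k + 1 - l) (by omega) (by omega)
      rw [show (k : ℤ) * q + (k + 1 - ((k + 1 - l : ℕ) : ℤ)) = (j.val : ℤ) by
        rw [hz, Nat.cast_sub (by omega)]; push_cast; ring,
        show k + 1 - (k + 1 - l) = l by omega] at this
      refine this.trans (Sim.symm ?_)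
      have h4 : InG (GG k n) ((-1) ^ (l - 1) * (1 : RR k n)) :=
        InG.sgn (neg_one_GG k n) _ ⟨1, Subgroup.one_mem _, rfl⟩
      rw [mul_one] at h4
      exact h4.sim _
    · rw [Wmap, if_neg (by rw [← hl, Nat.mod_eq_of_lt (show 1 < k by omega)]; exact h1),
        if_neg h0]
      have h5 := gcMeet_eq (lift v.1) (k * q + (k + 1 - l : ℕ)) l (k + 1 - l) (by omega) (by omega)
      have h6 := map_P (Pi.evalRingHom (fun _ => ℂ) v) (VV k n) (k * q + (k + 1 - l : ℕ)) l t
      rw [mapV_VV] at h6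
      have hs : (((k * q + (k + 1 - l : ℕ) : ℤ)) : ZMod n) = j + k - ((2 * l : ℕ) : ZMod n) + 1 := by
        rw [show ((k * q + (k + 1 - l : ℕ) : ℤ)) = (j.val : ℤ) + k - ((2 * l : ℕ) : ℤ) + 1 by
          rw [hz, Nat.cast_sub (by omega)]; push_cast; ring]
        push_cast
        simp
      have h7 : Wmap k n v.1 j = Wmap k n v.1 j := rfl
      have h8 : gcMeet (fun m : Fin l => v.1 (j + (k : ZMod n) - ((2 * l : ℕ) : ZMod n) + 1 + ((m : ℕ) : ZMod n)))
        (fun m : Fin (k + 1 - l) => v.1 (j + ((k - l : ℕ) : ZMod n) + 1 + ((m : ℕ) : ZMod n)))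
        = ((-1 : ℂ) ^ (l - 1)) • P (lift v.1) (k * q + (k + 1 - l : ℕ)) l := by
        rw [← h5]
        congr 1
        · funext m
          simp only [lift]
          rw [Int.cast_add, hs]; simp
        · funext m
          simp only [lift]
          rw [Int.cast_add, Int.cast_add, hs, Nat.cast_sub (by omega)]
          push_cast
          ring_nf
      show _ = gcMeet (fun m : Fin l => v.1 (j + (k : ZMod n) - ((2 * l : ℕ) : ZMod n) + 1 + ((m : ℕ) : ZMod n)))
        (fun m : Fin (k + 1 - l) => v.1 (j + ((k - l : ℕ) : ZMod n) + 1 + ((m : ℕ) : ZMod n))) t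
      rw [h8]
      simp only [Pi.smul_apply, smul_eq_mul, Pi.mul_apply, h6]
      simp

end HT

/-- Half-twist window formula (first part of Proposition 8.1): the half-twist
composition of Artin generators agrees componentwise with `W`, up to signs and
Laurent monomials in the frozen minors. -/
theorem half_twist_window_formula
    (k r n : ℕ) (hk : 2 ≤ k) (hr : 2 ≤ r) (hn : n = r * k) (j : ZMod n) :
    ∃ (ε : ℂ) (e : Fin n → ℤ), (ε = 1 ∨ ε = -1) ∧
      ∀ v : ZMod n → Fin k → ℂ, Generic k n v →
        halfTwist k n (k - 1) v j = (ε * laurent k n e v) • Wmap k n v j := by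
  have hn0 : n ≠ 0 := by rw [hn]; positivity
  haveI : NeZero n := ⟨hn0⟩
  obtain ⟨y, ⟨u, ⟨ε, e, hε, hu⟩, hy⟩, hW⟩ := HT.final k r n hk hr hn j
  refine ⟨ε, e, hε, fun v hv => ?_⟩
  funext t
  have h1 := HT.map_HTz (Pi.evalRingHom (fun _ => ℂ)
    (⟨v, hv⟩ : {v : ZMod n → Fin k → ℂ // Generic k n v})) (k - 1) (HT.VV k n)
  rw [HT.mapV_VV, HT.lift_HTz n r hn hn0] at h1
  have h2 := congrFun (congrFun h1 (j.val : ℤ)) t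
  simp only [HT.lift, HT.mapV] at h2
  rw [show ((j.val : ℤ) : ZMod n) = j by simp, hy] at h2
  rw [h2]
  simp only [Pi.smul_apply, smul_eq_mul, Pi.evalRingHom_apply, Pi.mul_apply]
  rw [hu, hW]

end
end
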